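/- arXiv:1710.03625 — 5 statements merged into one kernel-verified Lean document; each statement's English description precedes it below -/
import Mathlib

section
/- Let X be a real Banach space and S ⊆ ℝⁿ (n ≥ 1, with the Euclidean norm) a convex compact subset with nonempty interior. Then S is uniformly convex if and only if the set of extreme points of S coincides with the topological boundary of S, i.e. extr S = fr S. -/
open Metric Set
open scoped NNReal ENNReal

/-- The modulus of convexity of a set `S` in a real normed space:
`δ_S(ε) = sup{δ ≥ 0 : B((x₁+x₂)/2, δ) ⊆ S for all x₁, x₂ ∈ S with ‖x₁ − x₂‖ = ε}`. -/
noncomputable def setModulus {X : Type*} [NormedAddCommGroup X] [NormedSpace ℝ X]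
    (S : Set X) (ε : ℝ) : ℝ :=
  sSup {δ : ℝ | 0 ≤ δ ∧ ∀ x₁ ∈ S, ∀ x₂ ∈ S, ‖x₁ - x₂‖ = ε →
    closedBall (midpoint ℝ x₁ x₂) δ ⊆ S}

/-- The exact bound of Lipschitz continuity of `h` on `U`:
the infimum of all Lipschitz constants of `h` on `U`. -/
noncomputable def lipOn {α β : Type*} [PseudoMetricSpace α] [PseudoMetricSpace β]
    (h : α → β) (U : Set α) : ℝ :=
  sInf {ℓ : ℝ | 0 ≤ ℓ ∧ ∀ x₁ ∈ U, ∀ x₂ ∈ U, dist (h x₁) (h x₂) ≤ ℓ * dist x₁ x₂}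

/-- The exact regularity bound of `f` around `x₀`: the infimum of all `κ ≥ 0` such that,
for some `δ > 0`, `dist(x, f⁻¹(y)) ≤ κ‖y − f(x)‖` for all `x ∈ B(x₀, δ)`, `y ∈ B(f(x₀), δ)`;
it equals `+∞` when `f` is not metrically regular around `x₀`. -/
noncomputable def regBound {X Y : Type*} [NormedAddCommGroup X] [NormedAddCommGroup Y]
    (f : X → Y) (x₀ : X) : ℝ≥0∞ :=
  sInf (ENNReal.ofReal '' {κ : ℝ | 0 ≤ κ ∧ ∃ δ > 0,
    ∀ x ∈ closedBall x₀ δ, ∀ y ∈ closedBall (f x₀) δ,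
      Metric.infDist x {x' | f x' = y} ≤ κ * ‖y - f x‖})

/-- `S ∈ U_c(X)`: `S` is a nonempty closed convex set whose modulus of convexity
satisfies `δ_S(ε) ≥ cε²` for all `ε ∈ (0, diam S)`. -/
def UniformlyConvexWith {X : Type*} [NormedAddCommGroup X] [NormedSpace ℝ X]
    (c : ℝ) (S : Set X) : Prop :=
  S.Nonempty ∧ IsClosed S ∧ Convex ℝ S ∧
    ∀ ε : ℝ, 0 < ε → ε < Metric.diam S → c * ε ^ 2 ≤ setModulus S ε

/-- The modulus of convexity of a normed space
`δ_X(ε) = inf{1 − ‖(x₁+x₂)/2‖ : x₁, x₂ ∈ B̄(0,1), ‖x₁ − x₂‖ = ε}`. -/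
noncomputable def spaceModulus (X : Type*) [NormedAddCommGroup X] [NormedSpace ℝ X]
    (ε : ℝ) : ℝ :=
  sInf {d : ℝ | ∃ x₁ ∈ closedBall (0 : X) 1, ∃ x₂ ∈ closedBall (0 : X) 1,
    ‖x₁ - x₂‖ = ε ∧ d = 1 - ‖midpoint ℝ x₁ x₂‖}

/-- `S` is `r`-convex (strongly convex of radius `r`): a nonempty intersection
`⋂_{x ∈ M} B̄(x, r)` for some `M ⊊ X`. -/
def RConvex {X : Type*} [NormedAddCommGroup X] (r : ℝ) (S : Set X) : Prop :=
  S.Nonempty ∧ ∃ M : Set X, M ≠ Set.univ ∧ S = ⋂ x ∈ M, closedBall x r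

/-- `f` is open at a linear rate around `x₀`. -/
def OpenAtLinearRate {X Y : Type*} [PseudoMetricSpace X] [PseudoMetricSpace Y]
    (f : X → Y) (x₀ : X) : Prop :=
  ∃ δ > (0 : ℝ), ∃ ζ > (0 : ℝ), ∃ σ > (0 : ℝ), ∀ x ∈ closedBall x₀ δ, ∀ r ∈ Icc (0 : ℝ) δ,
    closedBall (f x) (σ * r) ∩ closedBall (f x₀) ζ ⊆ f '' closedBall x r

/-! Both conditions say that `S` is strictly convex. If the modulus is positive at `‖x - y‖`, then
the midpoint of `x, y ∈ S` is an interior point of `S`, and by convexity so is the rest of the open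
segment. Conversely, if `S` is strictly convex and `ε > 0`, the midpoints of all pairs in `S` at
distance `ε` form a compact subset of the interior, so one radius `δ > 0` works for all of them. -/

theorem strictConvex_of_frontier_subset_extremePoints {𝕜 E : Type*} [Semiring 𝕜] [PartialOrder 𝕜]
    [AddCommMonoid E] [SMul 𝕜 E] [TopologicalSpace E] {S : Set E} (hconv : Convex 𝕜 S)
    (h : frontier S ⊆ extremePoints 𝕜 S) : StrictConvex 𝕜 S := by
  refine strictConvex_iff_openSegment_subset.2 fun x hx y hy hxy z hz => ?_
  by_contra hz_int
  have hz_mem : z ∈ S := hconv.openSegment_subset hx hy hz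
  have hz_ext : z ∈ extremePoints 𝕜 S := h ⟨subset_closure hz_mem, hz_int⟩
  obtain ⟨hxz, hyz⟩ := (mem_extremePoints.1 hz_ext).2 x hx y hy hz
  exact hxy (hxz.trans hyz.symm)

theorem strictConvex_iff_extremePoints_eq_frontier {E : Type*} [AddCommGroup E] [Module ℝ E]
    [TopologicalSpace E] [IsTopologicalAddGroup E] [ContinuousSMul ℝ E] [Nontrivial E]
    {S : Set E} (hconv : Convex ℝ S) (hclosed : IsClosed S) :
    StrictConvex ℝ S ↔ extremePoints ℝ S = frontier S := by
  refine ⟨fun hS => ?_, fun h => strictConvex_of_frontier_subset_extremePoints hconv h.ge⟩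
  rw [hclosed.frontier_eq]
  exact (subset_sdiff.2 ⟨extremePoints_subset, (disjoint_interior_extremePoints S).symm⟩).antisymm
    hS.sdiff_interior_subset_extremePoints

section Diameter

variable {α : Type*} [PseudoMetricSpace α] {s : Set α}

theorem exists_dist_eq_diam_of_isCompact (hs : IsCompact s) (hne : s.Nonempty) :
    ∃ x ∈ s, ∃ y ∈ s, dist x y = diam s := by
  obtain ⟨⟨x, y⟩, ⟨hx, hy⟩, hmax⟩ :=
    (hs.prod hs).exists_isMaxOn (hne.prod hne) continuous_dist.continuousOn
  refine ⟨x, hx, y, hy, (dist_le_diam_of_mem hs.isBounded hx hy).antisymm ?_⟩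
  exact diam_le_of_forall_dist_le dist_nonneg fun a ha b hb => hmax (mk_mem_prod ha hb)

theorem exists_dist_eq_of_le_diam (hs : IsCompact s) (hconn : IsConnected s) {ε : ℝ}
    (hε : 0 ≤ ε) (hdiam : ε ≤ diam s) : ∃ x ∈ s, ∃ y ∈ s, dist x y = ε := by
  obtain ⟨x, hx, y, hy, hxy⟩ := exists_dist_eq_diam_of_isCompact hs hconn.nonempty
  obtain ⟨z, hz, hxz⟩ := hconn.isPreconnected.intermediate_value hx hy
    (continuous_const.dist continuous_id).continuousOn
    (show ε ∈ Icc (dist x x) (dist x y) from ⟨by rwa [dist_self], by rwa [hxy]⟩)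
  exact ⟨x, hx, z, hz, hxz⟩

end Diameter

section Modulus

variable {E : Type*} [NormedAddCommGroup E] [NormedSpace ℝ E] {S : Set E} {ε : ℝ}

theorem midpoint_mem_interior_of_setModulus_pos {x y : E} (hx : x ∈ S) (hy : y ∈ S)
    (h : 0 < setModulus S ‖x - y‖) : midpoint ℝ x y ∈ interior S := by
  obtain ⟨δ, ⟨-, hball⟩, hδ⟩ := exists_lt_of_lt_csSup
    (nonempty_iff_ne_empty.2 fun hempty => by simp [setModulus, hempty] at h) h
  exact mem_interior_iff_mem_nhds.2
    (Filter.mem_of_superset (closedBall_mem_nhds _ hδ) (hball x hx y hy rfl))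

theorem strictConvex_of_setModulus_pos (hconv : Convex ℝ S) (hbdd : Bornology.IsBounded S)
    (h : ∀ ε : ℝ, 0 < ε → ε ≤ diam S → 0 < setModulus S ε) : StrictConvex ℝ S := by
  refine hconv.strictConvex' fun x hx y hy hxy =>
    ⟨⅟2, midpoint_mem_interior_of_setModulus_pos hx.1 hy.1 (h _ ?_ ?_)⟩
  · exact norm_sub_pos_iff.2 hxy
  · exact dist_eq_norm x y ▸ dist_le_diam_of_mem hbdd hx.1 hy.1

-- If no two points of `S` were at distance `ε`, every `δ ≥ 0` would be admissible and
-- `setModulus S ε` would be the junk value `0`.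
theorem le_setModulus [Nontrivial E] (hbdd : Bornology.IsBounded S) {x y : E} (hx : x ∈ S)
    (hy : y ∈ S) (hxy : ‖x - y‖ = ε) {δ : ℝ} (hδ : 0 ≤ δ)
    (hball : ∀ x₁ ∈ S, ∀ x₂ ∈ S, ‖x₁ - x₂‖ = ε → closedBall (midpoint ℝ x₁ x₂) δ ⊆ S) :
    δ ≤ setModulus S ε := by
  refine le_csSup ⟨diam S / 2, fun r ⟨hr, hr_ball⟩ => ?_⟩ ⟨hδ, hball⟩
  have hdiam : 2 * r ≤ diam S :=
    diam_closedBall_eq (midpoint ℝ x y) hr ▸ diam_mono (hr_ball x hx y hy hxy) hbdd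
  linarith

/-- The midpoints of the chords of `S` of length `ε`: the centres of the balls that
`setModulus S ε` requires to lie in `S`. -/
def chordMidpoints (S : Set E) (ε : ℝ) : Set E :=
  (fun p : E × E => midpoint ℝ p.1 p.2) '' {p ∈ S ×ˢ S | ‖p.1 - p.2‖ = ε}

theorem midpoint_mem_chordMidpoints {x y : E} (hx : x ∈ S) (hy : y ∈ S) :
    midpoint ℝ x y ∈ chordMidpoints S ‖x - y‖ :=
  ⟨(x, y), ⟨⟨hx, hy⟩, rfl⟩, rfl⟩

theorem isCompact_chordMidpoints (hcomp : IsCompact S) (ε : ℝ) :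
    IsCompact (chordMidpoints S ε) := by
  have hchords : IsCompact {p ∈ S ×ˢ S | ‖p.1 - p.2‖ = ε} :=
    (hcomp.prod hcomp).inter_right (isClosed_eq (by fun_prop) continuous_const)
  refine hchords.image ?_
  simp only [midpoint_eq_smul_add]
  fun_prop

theorem chordMidpoints_subset_interior (hS : StrictConvex ℝ S) (hε : ε ≠ 0) :
    chordMidpoints S ε ⊆ interior S := by
  rintro _ ⟨⟨x, y⟩, ⟨⟨hx, hy⟩, hxy⟩, rfl⟩
  have hne : x ≠ y := sub_ne_zero.1 (norm_ne_zero_iff.1 (hxy.trans_ne hε))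
  exact hS.openSegment_subset hx hy hne (midpoint_mem_openSegment x y)

theorem exists_pos_forall_closedBall_midpoint_subset (hS : StrictConvex ℝ S)
    (hcomp : IsCompact S) (hε : ε ≠ 0) :
    ∃ δ > 0, ∀ x₁ ∈ S, ∀ x₂ ∈ S, ‖x₁ - x₂‖ = ε → closedBall (midpoint ℝ x₁ x₂) δ ⊆ S := by
  obtain ⟨δ, hδ, hthick⟩ := (isCompact_chordMidpoints hcomp ε).exists_cthickening_subset_open
    isOpen_interior (chordMidpoints_subset_interior hS hε)
  refine ⟨δ, hδ, fun x₁ hx₁ x₂ hx₂ hx => ?_⟩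
  have hmid : midpoint ℝ x₁ x₂ ∈ chordMidpoints S ε := hx ▸ midpoint_mem_chordMidpoints hx₁ hx₂
  exact (closedBall_subset_cthickening hmid δ).trans (hthick.trans interior_subset)

theorem setModulus_pos_of_strictConvex (hS : StrictConvex ℝ S) (hcomp : IsCompact S)
    (hε : 0 < ε) (hdiam : ε ≤ diam S) : 0 < setModulus S ε := by
  have hne : S.Nonempty := by
    by_contra! hempty
    exact hε.not_ge (by simpa [hempty] using hdiam)
  obtain ⟨x, hx, y, hy, hxy⟩ :=
    exists_dist_eq_of_le_diam hcomp (hS.convex.isConnected hne) hε.le hdiam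
  have : Nontrivial E := ⟨x, y, dist_pos.1 (hε.trans_eq hxy.symm)⟩
  obtain ⟨δ, hδ, hball⟩ := exists_pos_forall_closedBall_midpoint_subset hS hcomp hε.ne'
  exact hδ.trans_le (le_setModulus hcomp.isBounded hx hy (dist_eq_norm x y ▸ hxy) hδ.le hball)

theorem forall_setModulus_pos_iff_strictConvex (hconv : Convex ℝ S) (hcomp : IsCompact S) :
    (∀ ε : ℝ, 0 < ε → ε ≤ diam S → 0 < setModulus S ε) ↔ StrictConvex ℝ S :=
  ⟨strictConvex_of_setModulus_pos hconv hcomp.isBounded,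
    fun hS _ hε hdiam => setModulus_pos_of_strictConvex hS hcomp hε hdiam⟩

theorem uniformly_convex_iff_extremePoints_eq_frontier_general [Nontrivial E]
    (hconv : Convex ℝ S) (hcomp : IsCompact S) :
    (∀ ε : ℝ, 0 < ε → ε ≤ diam S → 0 < setModulus S ε) ↔ extremePoints ℝ S = frontier S :=
  (forall_setModulus_pos_iff_strictConvex hconv hcomp).trans
    (strictConvex_iff_extremePoints_eq_frontier hconv hcomp.isClosed)

end Modulus

/-- A convex compact subset of `ℝⁿ` with nonempty interior is uniformly convex
iff its extreme points are exactly its boundary points. Since `S` is compact,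
its diameter is attained, so uniform convexity means `δ_S(ε) > 0` for all
`ε ∈ (0, diam S]`. -/
theorem uniformly_convex_iff_extremePoints_eq_frontier
    (n : ℕ) (hn : 1 ≤ n) (S : Set (EuclideanSpace ℝ (Fin n)))
    (hconv : Convex ℝ S) (hcomp : IsCompact S) (hint : (interior S).Nonempty) :
    (∀ ε : ℝ, 0 < ε → ε ≤ Metric.diam S → 0 < setModulus S ε) ↔
      Set.extremePoints ℝ S = frontier S := by
  have : Nonempty (Fin n) := Fin.pos_iff_nonempty.1 hn
  exact uniformly_convex_iff_extremePoints_eq_frontier_general hconv hcomp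
end

section
/- Let X, Y be real Banach spaces, Ω ⊆ X an open nonempty set, f : Ω → Y, x₀ ∈ Ω and c > 0. Assume: (i) for some r₀ > 0 with the open ball int B(x₀, r₀) ⊆ Ω, f is differentiable on int B(x₀, r₀) and its derivative map Df is Lipschitz continuous there; (ii) the derivative Df(x₀) : X → Y is surjective; (iii) reg(f, x₀) · lip(Df, int B(x₀, r₀)) / 8 < c. Then there exists ρ ∈ (0, r₀) such that for every set S ∈ U_c(X) with S ⊆ B(x₀, ρ) and f(S) closed, there exists c' > 0 with f(S) ∈ U_{c'}(Y); in particular f(S) is a uniformly convex subset of Y. -/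
open Metric Set
open scoped NNReal ENNReal

/-!
Write `m` for the midpoint of `x₁` and `x₂`, and `K` for a Lipschitz constant of `Df`. The Taylor
estimate at `m` puts the midpoint of `f x₁` and `f x₂` within `K / 8 * ‖x₁ - x₂‖ ^ 2` of `f m`. If
`f` is metrically regular with constant `κ` and `κ * (K / 8 + θ) < c`, then near `x₀` every `y`
within `θ * ‖x₁ - x₂‖ ^ 2` of that midpoint is attained by `f` at distance less than
`c * ‖x₁ - x₂‖ ^ 2` from `m`, hence inside `S` by the uniform convexity of `S`. As `f` is locally
Lipschitz, say with constant `M`, the image is uniformly convex with constant `θ / M ^ 2`; its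
convexity follows from midpoint convexity because it is closed.
-/

open Filter Topology AffineMap

theorem ordConnected_of_isClosed_of_midpoint_mem {T : Set ℝ} (hT : IsClosed T)
    (hmid : ∀ a ∈ T, ∀ b ∈ T, midpoint ℝ a b ∈ T) : T.OrdConnected := by
  refine ⟨fun x hx y hy t ht => ?_⟩
  by_contra htT
  obtain ⟨⟨haT, hat⟩, ha⟩ := (hT.inter isClosed_Iic).isGreatest_csSup ⟨x, hx, ht.1⟩
    (bddAbove_Iic.mono inter_subset_right)
  obtain ⟨⟨hbT, htb⟩, hb⟩ := (hT.inter isClosed_Ici).isLeast_csInf ⟨y, hy, ht.2⟩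
    (bddBelow_Ici.mono inter_subset_right)
  set a := sSup (T ∩ Iic t)
  set b := sInf (T ∩ Ici t)
  have hat' : a < t := lt_of_le_of_ne hat fun h => htT (h ▸ haT)
  have htb' : t < b := lt_of_le_of_ne htb fun h => htT (h ▸ hbT)
  rcases le_total (midpoint ℝ a b) t with hle | hle
  · exact (midpoint_le_left.1 (ha ⟨hmid a haT b hbT, hle⟩)).not_gt (hat'.trans htb')
  · exact (right_le_midpoint.1 (hb ⟨hmid a haT b hbT, hle⟩)).not_gt (hat'.trans htb')

theorem convex_of_isClosed_of_midpoint_mem {E : Type*} [AddCommGroup E] [Module ℝ E]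
    [TopologicalSpace E] [IsTopologicalAddGroup E] [ContinuousSMul ℝ E] {C : Set E}
    (hC : IsClosed C) (hmid : ∀ x ∈ C, ∀ y ∈ C, midpoint ℝ x y ∈ C) : Convex ℝ C := by
  rw [convex_iff_segment_subset]
  intro x hx y hy
  rw [segment_eq_image_lineMap, image_subset_iff]
  have hT : (lineMap (k := ℝ) x y ⁻¹' C).OrdConnected :=
    ordConnected_of_isClosed_of_midpoint_mem (hC.preimage lineMap_continuous) fun a ha b hb => by
      simpa only [mem_preimage, map_midpoint] using hmid _ ha _ hb
  exact hT.out (by simpa using hx) (by simpa using hy)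

section Modulus

variable {X : Type*} [NormedAddCommGroup X] [NormedSpace ℝ X] {S : Set X} {x₁ x₂ : X}

theorem closedBall_midpoint_subset_of_lt_setModulus (hS : Convex ℝ S) {δ : ℝ} (h₁ : x₁ ∈ S)
    (h₂ : x₂ ∈ S) (hδ : δ < setModulus S ‖x₁ - x₂‖) : closedBall (midpoint ℝ x₁ x₂) δ ⊆ S := by
  obtain ⟨δ', ⟨-, hball⟩, hlt⟩ := exists_lt_of_lt_csSup
    (by exact ⟨0, le_rfl, fun a ha b hb _ => by simpa using hS.midpoint_mem ha hb⟩) hδ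
  exact (closedBall_subset_closedBall hlt.le).trans (hball x₁ h₁ x₂ h₂ rfl)

theorem le_setModulus_s1 (hS : Bornology.IsBounded S) {ε δ : ℝ} (hδ : 0 ≤ δ) (h₁ : x₁ ∈ S)
    (h₂ : x₂ ∈ S) (hε : ‖x₁ - x₂‖ = ε) (hε₀ : 0 < ε)
    (h : ∀ y₁ ∈ S, ∀ y₂ ∈ S, ‖y₁ - y₂‖ = ε → closedBall (midpoint ℝ y₁ y₂) δ ⊆ S) :
    δ ≤ setModulus S ε := by
  refine le_csSup ⟨diam S, ?_⟩ ⟨hδ, h⟩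
  rintro η ⟨hη, hball⟩
  have : Nontrivial X := ⟨x₁, x₂, norm_sub_pos_iff.1 (hε ▸ hε₀)⟩
  obtain ⟨u, hu⟩ := exists_norm_eq X hη
  have hsub := hball x₁ h₁ x₂ h₂ hε
  have hdist := dist_le_diam_of_mem hS (hsub (mem_closedBall_self hη))
    (hsub (show midpoint ℝ x₁ x₂ + u ∈ _ by simp [hu]))
  simpa [hu] using hdist

theorem exists_norm_sub_eq_of_lt_diam (hS : Convex ℝ S) {ε : ℝ} (hε : 0 ≤ ε)
    (hεd : ε < diam S) : ∃ x₁ ∈ S, ∃ x₂ ∈ S, ‖x₁ - x₂‖ = ε := by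
  obtain ⟨x, hx, y, hy, hlt⟩ : ∃ x ∈ S, ∃ y ∈ S, ε < dist x y := by
    by_contra! hle
    exact (diam_le_of_forall_dist_le hε hle).not_gt hεd
  have hpos : 0 < dist x y := hε.trans_lt hlt
  refine ⟨lineMap x y (ε / dist x y), hS.lineMap_mem hx hy
    ⟨by positivity, (div_le_one hpos).2 hlt.le⟩, x, hx, ?_⟩
  rw [← dist_eq_norm, dist_lineMap_left, Real.norm_of_nonneg (by positivity),
    div_mul_cancel₀ _ hpos.ne']

theorem uniformlyConvexWith_of_closedBall_midpoint_subset {c : ℝ} (hc : 0 ≤ c) (hne : S.Nonempty)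
    (hcl : IsClosed S)
    (h : S.Pairwise fun x y => closedBall (midpoint ℝ x y) (c * ‖x - y‖ ^ 2) ⊆ S) :
    UniformlyConvexWith c S := by
  have hconv : Convex ℝ S := convex_of_isClosed_of_midpoint_mem hcl fun x hx y hy => by
    rcases eq_or_ne x y with rfl | hxy
    · rwa [midpoint_self]
    · exact h hx hy hxy (mem_closedBall_self (by positivity))
  refine ⟨hne, hcl, hconv, fun ε hε hεd => ?_⟩
  have hb : Bornology.IsBounded S := by
    by_contra hb
    exact (hε.trans hεd).ne' (diam_eq_zero_of_unbounded hb)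
  obtain ⟨x₁, h₁, x₂, h₂, h₁₂⟩ := exists_norm_sub_eq_of_lt_diam hconv hε.le hεd
  refine le_setModulus_s1 hb (by positivity) h₁ h₂ h₁₂ hε fun y₁ hy₁ y₂ hy₂ hy => ?_
  rw [← hy] at hε ⊢
  exact h hy₁ hy₂ (norm_sub_pos_iff.1 hε)

namespace UniformlyConvexWith

-- The modulus controls only distances `ε < diam S`, so the segment is first shrunk slightly
-- about its midpoint; this costs the boundary of the ball.
theorem ball_midpoint_subset {c : ℝ} (hS : UniformlyConvexWith c S) (hb : Bornology.IsBounded S)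
    (h₁ : x₁ ∈ S) (h₂ : x₂ ∈ S) : ball (midpoint ℝ x₁ x₂) (c * ‖x₁ - x₂‖ ^ 2) ⊆ S := by
  obtain ⟨-, -, hconv, hmod⟩ := hS
  intro z hz
  set m := midpoint ℝ x₁ x₂ with hm
  have hpos : 0 < ‖x₁ - x₂‖ := by
    by_contra! h
    simp [h.antisymm (norm_nonneg _)] at hz
  have hdiam : ‖x₁ - x₂‖ ≤ diam S := dist_eq_norm x₁ x₂ ▸ dist_le_diam_of_mem hb h₁ h₂
  obtain ⟨t, ht, ht₀, ht₁⟩ :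
      ∃ t : ℝ, dist z m < c * (t * ‖x₁ - x₂‖) ^ 2 ∧ 0 < t ∧ t < 1 := by
    have hcont : Continuous fun t : ℝ => c * (t * ‖x₁ - x₂‖) ^ 2 := by fun_prop
    have hev : ∀ᶠ t in 𝓝[<] (1 : ℝ), dist z m < c * (t * ‖x₁ - x₂‖) ^ 2 ∧ 0 < t ∧ t < 1 :=
      (((hcont.tendsto 1).eventually_const_lt (by simpa using hz)).filter_mono
        nhdsWithin_le_nhds).and (Ioo_mem_nhdsLT one_pos)
    exact hev.exists
  have hshrink : ∀ x ∈ S, homothety m t x ∈ S := fun x hx => by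
    rw [homothety_eq_lineMap]
    exact hconv.lineMap_mem (hconv.midpoint_mem h₁ h₂) hx ⟨ht₀.le, ht₁.le⟩
  have hmid : midpoint ℝ (homothety m t x₁) (homothety m t x₂) = m := by
    rw [← map_midpoint, ← hm, homothety_apply_same]
  have hnorm : ‖homothety m t x₁ - homothety m t x₂‖ = t * ‖x₁ - x₂‖ := by
    simp [homothety_apply, ← smul_sub, norm_smul, abs_of_pos ht₀]
  have hsub := closedBall_midpoint_subset_of_lt_setModulus hconv (hshrink x₁ h₁) (hshrink x₂ h₂)
    (hnorm ▸ ht.trans_le (hmod _ (by positivity)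
      ((mul_lt_of_lt_one_left hpos ht₁).trans_le hdiam)))
  rw [hmid] at hsub
  exact hsub (mem_closedBall.2 le_rfl)

theorem image {Y : Type*} [NormedAddCommGroup Y] [NormedSpace ℝ Y] {f : X → Y} {c θ : ℝ} {M : ℝ≥0}
    (hS : UniformlyConvexWith c S) (hb : Bornology.IsBounded S) (hcl : IsClosed (f '' S))
    (hf : LipschitzOnWith M f S) (hθ : 0 ≤ θ)
    (h : S.Pairwise fun x₁ x₂ => closedBall (midpoint ℝ (f x₁) (f x₂)) (θ * ‖x₁ - x₂‖ ^ 2) ⊆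
      f '' ball (midpoint ℝ x₁ x₂) (c * ‖x₁ - x₂‖ ^ 2)) :
    UniformlyConvexWith (θ / M ^ 2) (f '' S) := by
  refine uniformlyConvexWith_of_closedBall_midpoint_subset (by positivity) (hS.1.image f) hcl ?_
  rintro _ ⟨x₁, h₁, rfl⟩ _ ⟨x₂, h₂, rfl⟩ hne
  have hradius : θ / M ^ 2 * ‖f x₁ - f x₂‖ ^ 2 ≤ θ * ‖x₁ - x₂‖ ^ 2 := calc
    _ ≤ θ / M ^ 2 * (M * ‖x₁ - x₂‖) ^ 2 := by
      gcongr
      exact hf.norm_sub_le h₁ h₂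
    _ = (M ^ 2 / M ^ 2) * (θ * ‖x₁ - x₂‖ ^ 2) := by ring
    _ ≤ θ * ‖x₁ - x₂‖ ^ 2 := mul_le_of_le_one_left (by positivity) (div_self_le_one _)
  calc closedBall (midpoint ℝ (f x₁) (f x₂)) (θ / M ^ 2 * ‖f x₁ - f x₂‖ ^ 2)
    _ ⊆ closedBall (midpoint ℝ (f x₁) (f x₂)) (θ * ‖x₁ - x₂‖ ^ 2) :=
      closedBall_subset_closedBall hradius
    _ ⊆ f '' ball (midpoint ℝ x₁ x₂) (c * ‖x₁ - x₂‖ ^ 2) := h h₁ h₂ (ne_of_apply_ne f hne)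
    _ ⊆ f '' S := image_mono (hS.ball_midpoint_subset hb h₁ h₂)

end UniformlyConvexWith

end Modulus

section LipschitzDerivative

variable {X Y : Type*} [NormedAddCommGroup X] [NormedSpace ℝ X] [NormedAddCommGroup Y]
  [NormedSpace ℝ Y] {f : X → Y} {f' : X → X →L[ℝ] Y} {s : Set X} {x y x₀ : X} {K : ℝ≥0}

theorem lipschitzOnWith_lipOn {α β : Type*} [PseudoMetricSpace α] [PseudoMetricSpace β] {g : α → β}
    {U : Set α} (hg : LipschitzOnWith K g U) : LipschitzOnWith (lipOn g U).toNNReal g U := by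
  have hle : ∀ x ∈ U, ∀ y ∈ U, dist (g x) (g y) ≤ lipOn g U * dist x y := fun x hx y hy => by
    rcases (dist_nonneg (x := x) (y := y)).eq_or_lt with h₀ | hpos
    · simpa [← h₀] using hg.dist_le_mul x hx y hy
    · rw [← div_le_iff₀ hpos]
      exact le_csInf ⟨K, K.2, hg.dist_le_mul⟩ fun ℓ hℓ => (div_le_iff₀ hpos).2 (hℓ.2 x hx y hy)
  exact LipschitzOnWith.of_dist_le_mul fun x hx y hy => (hle x hx y hy).trans <| by
    gcongr
    exact Real.le_coe_toNNReal _

theorem hasStrictFDerivAt_of_lipschitzOnWith (hs : s ∈ 𝓝 x₀) (hf : ∀ x ∈ s, HasFDerivAt f (f' x) x)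
    (hf' : LipschitzOnWith K f' s) : HasStrictFDerivAt f (f' x₀) x₀ :=
  hasStrictFDerivAt_of_hasFDerivAt_of_continuousAt (eventually_of_mem hs hf)
    (hf'.continuousOn.continuousAt hs)

theorem norm_image_sub_sub_le_of_lipschitzOnWith (hs : Convex ℝ s)
    (hf : ∀ x ∈ s, HasFDerivWithinAt f (f' x) s x) (hf' : LipschitzOnWith K f' s)
    (hx : x ∈ s) (hy : y ∈ s) : ‖f y - f x - f' x (y - x)‖ ≤ K / 2 * ‖y - x‖ ^ 2 := by
  have hmaps : MapsTo (lineMap (k := ℝ) x y) (Icc 0 1) s := fun t ht => hs.lineMap_mem hx hy ht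
  let g : ℝ → Y := fun t => f (lineMap x y t) - f x - t • f' x (y - x)
  have hg : ∀ t ∈ Icc (0 : ℝ) 1,
      HasDerivWithinAt g (f' (lineMap x y t) (y - x) - f' x (y - x)) (Icc 0 1) t := fun t ht => by
    have hcomp := (hf _ (hmaps ht)).comp_hasDerivWithinAt t hasDerivWithinAt_lineMap hmaps
    have hlin := (hasDerivWithinAt_id t (Icc 0 1)).smul_const (f' x (y - x))
    rw [one_smul] at hlin
    exact (hcomp.sub_const (f x)).sub hlin
  have hbound : ∀ t ∈ Ico (0 : ℝ) 1,
      ‖f' (lineMap x y t) (y - x) - f' x (y - x)‖ ≤ K * ‖y - x‖ ^ 2 * t := fun t ht => calc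
    _ ≤ ‖f' (lineMap x y t) - f' x‖ * ‖y - x‖ := (f' (lineMap x y t) - f' x).le_opNorm (y - x)
    _ ≤ K * dist (lineMap x y t) x * ‖y - x‖ := by
      gcongr
      rw [← dist_eq_norm]
      exact hf'.dist_le_mul _ (hmaps (Ico_subset_Icc_self ht)) _ hx
    _ = K * ‖y - x‖ ^ 2 * t := by
      rw [dist_lineMap_left, Real.norm_of_nonneg ht.1, dist_comm, dist_eq_norm]
      ring
  have hB : ∀ t : ℝ,
      HasDerivAt (fun t : ℝ => K / 2 * ‖y - x‖ ^ 2 * t ^ 2) (K * ‖y - x‖ ^ 2 * t) t := fun t =>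
    ((hasDerivAt_pow 2 t).const_mul (K / 2 * ‖y - x‖ ^ 2)).congr_deriv (by norm_num; ring)
  have hle := image_norm_le_of_norm_deriv_right_le_deriv_boundary
    (fun t ht => (hg t ht).continuousWithinAt)
    (fun t ht => (hg t (Ico_subset_Icc_self ht)).mono_of_mem_nhdsWithin
      (Icc_mem_nhdsGE_of_mem ht))
    (by simp [g]) hB hbound (right_mem_Icc.2 zero_le_one)
  simpa [g] using hle

theorem norm_midpoint_image_sub_image_midpoint_le (hs : Convex ℝ s)
    (hf : ∀ x ∈ s, HasFDerivWithinAt f (f' x) s x) (hf' : LipschitzOnWith K f' s)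
    (hx : x ∈ s) (hy : y ∈ s) :
    ‖midpoint ℝ (f x) (f y) - f (midpoint ℝ x y)‖ ≤ K / 8 * ‖x - y‖ ^ 2 := by
  set m := midpoint ℝ x y with hm
  have hms : m ∈ s := hs.midpoint_mem hx hy
  have hxm : x - m = (2⁻¹ : ℝ) • (x - y) := by
    rw [hm, left_sub_midpoint, invOf_eq_inv]
  have hym : y - m = -(x - m) := by
    rw [hm, right_sub_midpoint, left_sub_midpoint, ← smul_neg, neg_sub]
  have hnorm : ‖x - m‖ = ‖x - y‖ / 2 := by
    rw [hxm, norm_smul, norm_inv, Real.norm_ofNat]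
    ring
  have hTx := norm_image_sub_sub_le_of_lipschitzOnWith hs hf hf' hms hx
  have hTy := norm_image_sub_sub_le_of_lipschitzOnWith hs hf hf' hms hy
  rw [hym, norm_neg, map_neg, hnorm] at hTy
  rw [hnorm] at hTx
  -- The first-order terms at `m` cancel, since `x - m` and `y - m` are opposite.
  have hsum : midpoint ℝ (f x) (f y) - f m =
      (2⁻¹ : ℝ) • ((f x - f m - f' m (x - m)) + (f y - f m - -f' m (x - m))) := by
    rw [midpoint_eq_smul_add, invOf_eq_inv]
    module
  rw [hsum, norm_smul, norm_inv, Real.norm_ofNat]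
  linarith [norm_add_le (f x - f m - f' m (x - m)) (f y - f m - -f' m (x - m))]

end LipschitzDerivative

/-- `f` is metrically regular around `x₀` with constant `κ`: `dist(x, f⁻¹(y)) ≤ κ dist(y, f(x))`
for all `(x, y)` near `(x₀, f(x₀))`. The extended distance is used so that, unlike in `regBound`,
the empty set is at distance `∞` and the inequality forces `f x' = y` to be solvable. -/
def MetricallyRegularWith {α β : Type*} [PseudoEMetricSpace α] [PseudoEMetricSpace β]
    (κ : ℝ≥0) (f : α → β) (x₀ : α) : Prop :=
  ∀ᶠ p in 𝓝 (x₀, f x₀), infEDist p.1 (f ⁻¹' {p.2}) ≤ κ * edist p.2 (f p.1)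

theorem exists_metricallyRegularWith_of_hasStrictFDerivAt {𝕜 X Y : Type*}
    [NontriviallyNormedField 𝕜] [NormedAddCommGroup X] [NormedSpace 𝕜 X] [CompleteSpace X]
    [NormedAddCommGroup Y] [NormedSpace 𝕜 Y] [CompleteSpace Y] {f : X → Y} {f' : X →L[𝕜] Y}
    {x₀ : X} (hf : HasStrictFDerivAt f f' x₀) (hsurj : f'.range = ⊤) :
    ∃ κ, MetricallyRegularWith κ f x₀ := by
  let g := f'.nonlinearRightInverseOfSurjective hsurj
  have hg : 0 < g.nnnorm := f'.nonlinearRightInverseOfSurjective_nnnorm_pos hsurj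
  obtain ⟨s, hs, happrox⟩ :=
    hf.approximates_deriv_on_nhds (c := g.nnnorm⁻¹ / 2) (Or.inr (by positivity))
  obtain ⟨ε, hε, hεs⟩ := nhds_basis_closedBall.mem_iff.1 hs
  have hcont : ContinuousAt f x₀ := hf.continuousAt
  have hsmall : ∀ᶠ p in 𝓝 (x₀, f x₀), 2 * g.nnnorm * dist p.2 (f p.1) + dist p.1 x₀ < ε := by
    have : ContinuousAt (fun p : X × Y => 2 * g.nnnorm * dist p.2 (f p.1) + dist p.1 x₀)
        (x₀, f x₀) := by fun_prop
    exact this.eventually_lt_const (by simpa using hε)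
  refine ⟨2 * g.nnnorm, hsmall.mono fun ⟨x, y⟩ hxy => ?_⟩
  obtain ⟨x', hx', hx'y⟩ : y ∈ f '' closedBall x (2 * g.nnnorm * dist y (f x)) := by
    refine happrox.surjOn_closedBall_of_nonlinearRightInverse g (by positivity)
      ((closedBall_subset_closedBall' hxy.le).trans hεs) (mem_closedBall.2 (le_of_eq ?_))
    have : (g.nnnorm : ℝ) ≠ 0 := by positivity
    push_cast
    field_simp
    ring
  refine (infEDist_le_edist_of_mem (by exact hx'y)).trans ?_
  rw [mem_closedBall, dist_comm] at hx'
  rw [edist_nndist, edist_nndist]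
  exact_mod_cast hx'

namespace MetricallyRegularWith

theorem range_mem_nhds {α β : Type*} [PseudoEMetricSpace α] [PseudoMetricSpace β] {κ : ℝ≥0}
    {f : α → β} {x₀ : α} (h : MetricallyRegularWith κ f x₀) : range f ∈ 𝓝 (f x₀) := by
  have hy : ∀ᶠ y in 𝓝 (f x₀), infEDist x₀ (f ⁻¹' {y}) ≤ κ * edist y (f x₀) :=
    (Continuous.prodMk_right x₀).continuousAt.eventually h
  filter_upwards [hy] with y hy
  have hlt : infEDist x₀ (f ⁻¹' {y}) < ∞ :=
    hy.trans_lt (ENNReal.mul_lt_top ENNReal.coe_lt_top (edist_lt_top _ _))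
  obtain ⟨x, hx, -⟩ := infEDist_lt_iff.1 hlt
  exact ⟨x, hx⟩

theorem eventually_mem_image_ball {α β : Type*} [PseudoMetricSpace α] [PseudoMetricSpace β]
    {κ : ℝ≥0} {f : α → β} {x₀ : α} (h : MetricallyRegularWith κ f x₀) :
    ∀ᶠ p in 𝓝 (x₀, f x₀), ∀ r, κ * dist p.2 (f p.1) < r → p.2 ∈ f '' ball p.1 r := by
  filter_upwards [h] with ⟨x, y⟩ hxy r hr
  have hlt : infEDist x (f ⁻¹' {y}) < ENNReal.ofReal r := calc
    _ ≤ κ * edist y (f x) := hxy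
    _ = ENNReal.ofReal (κ * dist y (f x)) := by
      rw [ENNReal.ofReal_mul κ.coe_nonneg, ENNReal.ofReal_coe_nnreal, edist_dist]
    _ < ENNReal.ofReal r := (ENNReal.ofReal_lt_ofReal_iff_of_nonneg (by positivity)).2 hr
  obtain ⟨x', hx', hlt⟩ := infEDist_lt_iff.1 hlt
  rw [edist_comm, edist_lt_ofReal] at hlt
  exact ⟨x', hlt, hx'⟩

variable {X Y : Type*} [NormedAddCommGroup X] [NormedAddCommGroup Y] {f : X → Y} {x₀ : X}
  {κ κ₀ : ℝ≥0}

theorem regBound_le (h : MetricallyRegularWith κ f x₀) : regBound f x₀ ≤ κ := by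
  obtain ⟨δ, hδ, hδκ⟩ := nhds_basis_closedBall.eventually_iff.1 h
  have hinf : ∀ x ∈ closedBall x₀ δ, ∀ y ∈ closedBall (f x₀) δ,
      infDist x {x' | f x' = y} ≤ κ * ‖y - f x‖ := fun x hx y hy => by
    have hle : infEDist x (f ⁻¹' {y}) ≤ κ * edist y (f x) :=
      @hδκ (x, y) (closedBall_prod_same x₀ (f x₀) δ ▸ mk_mem_prod hx hy)
    refine ENNReal.toReal_le_of_le_ofReal (by positivity) (hle.trans_eq ?_)
    rw [ENNReal.ofReal_mul κ.coe_nonneg, ENNReal.ofReal_coe_nnreal, edist_dist, dist_eq_norm]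
  exact sInf_le ⟨κ, ⟨κ.coe_nonneg, δ, hδ, hinf⟩, ENNReal.ofReal_coe_nnreal⟩

theorem of_regBound_lt (h : MetricallyRegularWith κ₀ f x₀) (hκ : regBound f x₀ < κ) :
    MetricallyRegularWith κ f x₀ := by
  obtain ⟨_, ⟨ℓ, ⟨hℓ₀, δ, hδ, hℓ⟩, rfl⟩, hℓκ⟩ := sInf_lt_iff.1 hκ
  have hrange : ∀ᶠ p in 𝓝 (x₀, f x₀), p.2 ∈ range f := continuousAt_snd.eventually h.range_mem_nhds
  filter_upwards [closedBall_mem_nhds _ hδ, hrange] with ⟨x, y⟩ hxy hy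
  rw [← closedBall_prod_same] at hxy
  calc infEDist x (f ⁻¹' {y})
    _ = ENNReal.ofReal (infDist x (f ⁻¹' {y})) := (ENNReal.ofReal_toReal (infEDist_ne_top hy)).symm
    _ ≤ ENNReal.ofReal (ℓ * ‖y - f x‖) := ENNReal.ofReal_le_ofReal (hℓ x hxy.1 y hxy.2)
    _ = ENNReal.ofReal ℓ * edist y (f x) := by
      rw [ENNReal.ofReal_mul hℓ₀, ← dist_eq_norm, edist_dist]
    _ ≤ κ * edist y (f x) := by gcongr

theorem exists_mul_lt_of_regBound_mul_lt (h : MetricallyRegularWith κ₀ f x₀) {a b : ℝ≥0∞}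
    (ha : a ≠ ∞) (hab : regBound f x₀ * a < b) :
    ∃ κ : ℝ≥0, MetricallyRegularWith κ f x₀ ∧ κ * a < b := by
  have hfin : regBound f x₀ < ∞ := h.regBound_le.trans_lt ENNReal.coe_lt_top
  have hlt : ∀ᶠ κ in 𝓝[>] regBound f x₀, κ * a < b :=
    ((ENNReal.continuous_mul_const ha).continuousAt.eventually_lt_const hab).filter_mono
      nhdsWithin_le_nhds
  have : (𝓝[>] regBound f x₀).NeBot := nhdsGT_neBot_of_exists_gt ⟨∞, hfin⟩
  obtain ⟨κ, hκb, hκ, hκ_top⟩ := (hlt.and (Ioo_mem_nhdsGT hfin)).exists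
  lift κ to ℝ≥0 using hκ_top.ne
  exact ⟨κ, h.of_regBound_lt hκ, hκb⟩

end MetricallyRegularWith

section LocalImage

variable {X Y : Type*} [NormedAddCommGroup X] [NormedSpace ℝ X] [NormedAddCommGroup Y]
  [NormedSpace ℝ Y] {f : X → Y} {f' : X → X →L[ℝ] Y} {x₀ : X}

theorem MetricallyRegularWith.eventually_closedBall_midpoint_subset {s : Set X} {κ K : ℝ≥0}
    {θ c : ℝ} (hκ : MetricallyRegularWith κ f x₀) (hs : s ∈ 𝓝 x₀) (hconv : Convex ℝ s)
    (hf : ∀ x ∈ s, HasFDerivWithinAt f (f' x) s x) (hf' : LipschitzOnWith K f' s)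
    (hθ : κ * (K / 8 + θ) < c) :
    ∀ᶠ p in 𝓝 (x₀, x₀), p.1 ≠ p.2 →
      closedBall (midpoint ℝ (f p.1) (f p.2)) (θ * ‖p.1 - p.2‖ ^ 2) ⊆
        f '' ball (midpoint ℝ p.1 p.2) (c * ‖p.1 - p.2‖ ^ 2) := by
  have hcont : ContinuousAt f x₀ := (hf x₀ (mem_of_mem_nhds hs)).continuousWithinAt.continuousAt hs
  obtain ⟨δ, hδ, hδκ⟩ := Metric.eventually_nhds_iff.1 hκ.eventually_mem_image_ball
  have hdomain : ∀ᶠ p in 𝓝 (x₀, x₀), dist (midpoint ℝ p.1 p.2) x₀ < δ := by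
    have : ContinuousAt (fun p : X × X => dist (midpoint ℝ p.1 p.2) x₀) (x₀, x₀) := by
      simp only [midpoint_eq_smul_add]
      fun_prop
    exact this.eventually_lt_const (by simpa using hδ)
  have hcodomain : ∀ᶠ p in 𝓝 (x₀, x₀),
      θ * ‖p.1 - p.2‖ ^ 2 + dist (midpoint ℝ (f p.1) (f p.2)) (f x₀) < δ := by
    have : ContinuousAt (fun p : X × X =>
        θ * ‖p.1 - p.2‖ ^ 2 + dist (midpoint ℝ (f p.1) (f p.2)) (f x₀)) (x₀, x₀) := by
      simp only [midpoint_eq_smul_add]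
      fun_prop
    exact this.eventually_lt_const (by simpa using hδ)
  filter_upwards [hdomain, hcodomain, prod_mem_nhds hs hs] with ⟨x₁, x₂⟩ hm hy₀ ⟨h₁, h₂⟩ hne y hy
  have hpos : 0 < ‖x₁ - x₂‖ := norm_sub_pos_iff.2 hne
  have hyx₀ : dist y (f x₀) < δ :=
    (dist_triangle _ _ _).trans_lt ((add_le_add_left (mem_closedBall.1 hy) _).trans_lt hy₀)
  have hym : dist y (f (midpoint ℝ x₁ x₂)) ≤ (K / 8 + θ) * ‖x₁ - x₂‖ ^ 2 := by
    have hmid := norm_midpoint_image_sub_image_midpoint_le hconv hf hf' h₁ h₂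
    rw [← dist_eq_norm] at hmid
    linarith [dist_triangle y (midpoint ℝ (f x₁) (f x₂)) (f (midpoint ℝ x₁ x₂)),
      mem_closedBall.1 hy]
  refine hδκ (y := (midpoint ℝ x₁ x₂, y)) (max_lt hm hyx₀) _ ?_
  calc κ * dist y (f (midpoint ℝ x₁ x₂))
    _ ≤ κ * ((K / 8 + θ) * ‖x₁ - x₂‖ ^ 2) := by gcongr
    _ = κ * (K / 8 + θ) * ‖x₁ - x₂‖ ^ 2 := by ring
    _ < c * ‖x₁ - x₂‖ ^ 2 := by gcongr

theorem MetricallyRegularWith.exists_forall_uniformlyConvexWith_image {κ K : ℝ≥0} {c r₀ : ℝ}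
    (hκ : MetricallyRegularWith κ f x₀) (hr₀ : 0 < r₀)
    (hf : ∀ x ∈ ball x₀ r₀, HasFDerivAt f (f' x) x) (hf' : LipschitzOnWith K f' (ball x₀ r₀))
    (hc : κ * (K / 8) < c) :
    ∃ ρ, 0 < ρ ∧ ρ < r₀ ∧ ∃ c' > 0, ∀ S, UniformlyConvexWith c S → S ⊆ closedBall x₀ ρ →
      IsClosed (f '' S) → UniformlyConvexWith c' (f '' S) := by
  have hball : ball x₀ r₀ ∈ 𝓝 x₀ := ball_mem_nhds x₀ hr₀
  obtain ⟨M, s, hs, hM⟩ :=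
    (hasStrictFDerivAt_of_lipschitzOnWith hball hf hf').exists_lipschitzOnWith
  obtain ⟨θ, hθc, hθ⟩ : ∃ θ : ℝ, κ * (K / 8 + θ) < c ∧ 0 < θ := by
    have hcont : Continuous fun θ : ℝ => κ * (K / 8 + θ) := by fun_prop
    have hev : ∀ᶠ θ in 𝓝[>] (0 : ℝ), κ * (K / 8 + θ) < c :=
      ((hcont.tendsto 0).eventually_lt_const (by simpa using hc)).filter_mono nhdsWithin_le_nhds
    exact (hev.and self_mem_nhdsWithin).exists
  have hmid := hκ.eventually_closedBall_midpoint_subset hball (convex_ball x₀ r₀)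
    (fun x hx => (hf x hx).hasFDerivWithinAt) hf' hθc
  rw [nhds_prod_eq] at hmid
  obtain ⟨t, ht, hmid⟩ := mem_prod_same_iff.1 hmid
  obtain ⟨ρ, hρ, hsub⟩ := nhds_basis_closedBall.mem_iff.1 (inter_mem hs ht)
  have hM' : LipschitzOnWith (M + 1) f s := hM.weaken (by simp)
  refine ⟨min ρ (r₀ / 2), by positivity, by grind, θ / ((M + 1 : ℝ≥0) : ℝ) ^ 2, by positivity,
    fun S hS hSρ hcl => ?_⟩
  have hSst : S ⊆ s ∩ t := hSρ.trans ((closedBall_subset_closedBall (min_le_left _ _)).trans hsub)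
  exact hS.image (isBounded_closedBall.subset hSρ) hcl
    (hM'.mono fun x hx => (hSst hx).1) hθ.le
    fun x₁ h₁ x₂ h₂ => hmid (mk_mem_prod (hSst h₁).2 (hSst h₂).2)

theorem polyak_convexity_principle_extension_general {c r₀ : ℝ} (hr₀ : 0 < r₀)
    (hf : ∀ x ∈ ball x₀ r₀, HasFDerivAt f (f' x) x)
    (hlip : ∃ K : ℝ≥0, LipschitzOnWith K f' (ball x₀ r₀))
    (hmr : ∃ κ, MetricallyRegularWith κ f x₀)
    (hreg : regBound f x₀ * ENNReal.ofReal (lipOn f' (ball x₀ r₀)) / 8 < ENNReal.ofReal c) :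
    ∃ ρ, 0 < ρ ∧ ρ < r₀ ∧ ∃ c' > 0, ∀ S, UniformlyConvexWith c S → S ⊆ closedBall x₀ ρ →
      IsClosed (f '' S) → UniformlyConvexWith c' (f '' S) := by
  obtain ⟨K, hK⟩ := hlip
  obtain ⟨κ₀, hκ₀⟩ := hmr
  rw [mul_div_assoc] at hreg
  obtain ⟨κ, hκ, hκc⟩ := hκ₀.exists_mul_lt_of_regBound_mul_lt (by finiteness) hreg
  rw [ENNReal.lt_ofReal_iff_toReal_lt (by finiteness)] at hκc
  exact hκ.exists_forall_uniformlyConvexWith_image hr₀ hf (lipschitzOnWith_lipOn hK)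
    (by simpa [ENNReal.ofReal] using hκc)

end LocalImage

/-- Extension of the Polyak convexity principle (Theorem 3.1 of the paper). -/
theorem polyak_convexity_principle_extension
    {X Y : Type*} [NormedAddCommGroup X] [NormedSpace ℝ X] [CompleteSpace X]
    [NormedAddCommGroup Y] [NormedSpace ℝ Y] [CompleteSpace Y]
    (Ω : Set X) (hΩopen : IsOpen Ω) (hΩne : Ω.Nonempty)
    (f : X → Y) (x₀ : X) (hx₀ : x₀ ∈ Ω) (c : ℝ) (hc : 0 < c)
    (r₀ : ℝ) (hr₀ : 0 < r₀) (hballΩ : ball x₀ r₀ ⊆ Ω)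
    -- (i) f ∈ C^{1,1}(int B(x₀, r₀))
    (hdiff : ∀ x ∈ ball x₀ r₀, DifferentiableAt ℝ f x)
    (hlip : ∃ K : ℝ≥0, LipschitzOnWith K (fderiv ℝ f) (ball x₀ r₀))
    -- (ii) Df(x₀) is onto
    (hsurj : Function.Surjective (fderiv ℝ f x₀))
    -- (iii) reg(f, x₀) · lip(Df, int B(x₀, r₀)) / 8 < c
    (hreg : regBound f x₀ * ENNReal.ofReal (lipOn (fderiv ℝ f) (ball x₀ r₀)) / 8
      < ENNReal.ofReal c) :
    ∃ ρ : ℝ, 0 < ρ ∧ ρ < r₀ ∧ ∀ S : Set X, UniformlyConvexWith c S →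
      S ⊆ closedBall x₀ ρ → IsClosed (f '' S) →
      ∃ c' : ℝ, 0 < c' ∧ UniformlyConvexWith c' (f '' S) := by
  obtain ⟨K, hK⟩ := hlip
  have hf : ∀ x ∈ ball x₀ r₀, HasFDerivAt f (fderiv ℝ f x) x := fun x hx => (hdiff x hx).hasFDerivAt
  have hstrict := hasStrictFDerivAt_of_lipschitzOnWith (ball_mem_nhds x₀ hr₀) hf hK
  have hmr := exists_metricallyRegularWith_of_hasStrictFDerivAt hstrict
    (LinearMap.range_eq_top.2 hsurj)
  obtain ⟨ρ, hρ, hρr₀, c', hc', h⟩ :=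
    polyak_convexity_principle_extension_general hr₀ hf ⟨K, hK⟩ hmr hreg
  exact ⟨ρ, hρ, hρr₀, fun S hS hSρ hcl => ⟨c', hc', h S hS hSρ hcl⟩⟩
end

section
/- Let X be a reflexive real Banach space, Y a real Banach space, Ω ⊆ X open nonempty, f : Ω → Y and x₀ ∈ Ω. Assume: (i) f is continuous on B(x₀, r₀) ⊆ Ω for some r₀ > 0; (ii) for every y ∈ B(f(x₀), r₀), the function x ↦ dist(x, f⁻¹(y)) is lower semicontinuous with respect to the weak topology of X; (iii) f is metrically regular around x₀. Then there exists ρ ∈ (0, r₀) such that for every closed convex set S ⊆ B(x₀, ρ), the image f(S) is closed in Y. -/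
open Metric Set
open scoped NNReal ENNReal

/-!
A point `y` in the closure of `f(S)` is the limit of `f` along an ultrafilter on `S`, and this
ultrafilter converges weakly to some `x ∈ S` because `S` is weakly compact. For fixed `s ∈ S`, weak
lower semicontinuity lets the inequality `dist(t, f⁻¹(f s)) ≤ κ‖f s − f t‖` pass to the limit
`t → x`, giving `dist(x, f⁻¹(f s)) ≤ κ‖f s − y‖`. Letting now `f s → y`, the point `x` is a norm
limit of points where `f` takes the values `f s`, so norm continuity of `f` at `x` yields `f x = y`.
-/

section

open Filter Topology

/-- Metric regularity of `f` around `x₀`: near `x₀`, the distance to the solution set of `f x = y`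
is controlled by the residual. As `infDist` to the empty set is `0`, nothing is required of points
`y` outside the range of `f`. -/
def MetricallyRegularAt {X Y : Type*} [PseudoMetricSpace X] [PseudoMetricSpace Y]
    (f : X → Y) (x₀ : X) : Prop :=
  ∃ δ > (0 : ℝ), ∃ κ : ℝ, 0 ≤ κ ∧ ∀ x ∈ closedBall x₀ δ, ∀ y ∈ closedBall (f x₀) δ,
    infDist x (f ⁻¹' {y}) ≤ κ * dist y (f x)

theorem MetricallyRegularAt.exists_nhds_infDist_preimage_le {X Y : Type*} [PseudoMetricSpace X]
    [PseudoMetricSpace Y] {f : X → Y} {x₀ : X} (hreg : MetricallyRegularAt f x₀)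
    (hf : ContinuousAt f x₀) :
    ∃ κ : ℝ, ∃ U ∈ 𝓝 x₀, ∀ x ∈ U, ∀ x' ∈ U,
      infDist x (f ⁻¹' {f x'}) ≤ κ * dist (f x') (f x) := by
  obtain ⟨δ, hδ, κ, -, h⟩ := hreg
  exact ⟨κ, closedBall x₀ δ ∩ f ⁻¹' closedBall (f x₀) δ,
    inter_mem (closedBall_mem_nhds _ hδ) (hf (closedBall_mem_nhds _ hδ)),
    fun x hx x' hx' => h x hx.1 (f x') hx'.2⟩

theorem isCompact_toWeakSpace_image_of_isClosed_of_convex {𝕜 X : Type*} [RCLike 𝕜]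
    [NormedAddCommGroup X] [NormedSpace 𝕜 X] [NormedSpace ℝ X] [IsScalarTower ℝ 𝕜 X]
    (hrefl : Function.Surjective (NormedSpace.inclusionInDoubleDual 𝕜 X)) {S : Set X}
    (hclosed : IsClosed S) (hconv : Convex ℝ S) (hbdd : Bornology.IsBounded S) :
    IsCompact (toWeakSpace 𝕜 X '' S) := by
  have hrange : range (NormedSpace.inclusionInDoubleDualWeak 𝕜 X) = univ :=
    Function.Surjective.range_eq hrefl
  have hcompact : IsCompact (closure (toWeakSpace 𝕜 X '' S)) :=
    NormedSpace.isCompact_closure_of_isBounded 𝕜 X _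
      (by rwa [preimage_image_eq _ (toWeakSpace 𝕜 X).injective])
      (by simp only [hrange, subset_univ])
  rwa [← hconv.toWeakSpace_closure 𝕜, hclosed.closure_eq] at hcompact

theorem tendsto_of_tendsto_infDist_preimage {ι X Y : Type*} [PseudoMetricSpace X]
    [TopologicalSpace Y] {f : X → Y} {x : X} {l : Filter ι} {v : ι → Y} (hf : ContinuousAt f x)
    (hv : ∀ᶠ i in l, v i ∈ range f)
    (hdist : Tendsto (fun i => infDist x (f ⁻¹' {v i})) l (𝓝 0)) :
    Tendsto v l (𝓝 (f x)) := by
  intro V hV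
  obtain ⟨r, hr, hball⟩ := Metric.mem_nhds_iff.1 (hf hV)
  rw [mem_map]
  filter_upwards [hv, hdist.eventually_lt_const hr] with i ⟨z₀, hz₀⟩ hi
  obtain ⟨z, hz : f z = v i, hxz⟩ := (infDist_lt_iff ⟨z₀, hz₀⟩).1 hi
  rw [mem_preimage, ← hz]
  exact hball (mem_ball'.2 hxz)

/-- In the intended case `W` is `X` with its weak topology and `e` is the identity map. -/
theorem isClosed_image_of_isCompact_of_infDist_preimage_le {W X Y : Type*} [TopologicalSpace W]
    [PseudoMetricSpace X] [MetricSpace Y] {e : W → X} {f : X → Y} {K : Set W} {κ : ℝ}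
    (hK : IsCompact K) (hf : ∀ w ∈ K, ContinuousAt f (e w))
    (hlsc : ∀ s ∈ K, LowerSemicontinuous fun w => infDist (e w) (f ⁻¹' {f (e s)}))
    (hreg : ∀ t ∈ K, ∀ s ∈ K, infDist (e t) (f ⁻¹' {f (e s)}) ≤ κ * dist (f (e s)) (f (e t))) :
    IsClosed ((fun w => f (e w)) '' K) := by
  refine isClosed_of_closure_subset fun y hy => ?_
  obtain ⟨V, hKV, hVy⟩ := mem_closure_iff_ultrafilter.1 hy
  let U : Ultrafilter W := Ultrafilter.ofComapInfPrincipal hKV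
  have hKU : ∀ᶠ t in U, t ∈ K := Ultrafilter.ofComapInfPrincipal_mem hKV
  have hUy : Tendsto (fun t => f (e t)) U (𝓝 y) := by
    rwa [Tendsto, ← Ultrafilter.coe_map, Ultrafilter.ofComapInfPrincipal_eq_of_map]
  obtain ⟨w, hwK, hUw⟩ := hK.ultrafilter_le_nhds' U hKU
  have estimate : ∀ s ∈ K, infDist (e w) (f ⁻¹' {f (e s)}) ≤ κ * dist (f (e s)) y := fun s hs =>
    (hlsc s hs).isClosed_epigraph.mem_of_tendsto
      (Tendsto.prodMk_nhds hUw ((tendsto_const_nhds.dist hUy).const_mul κ))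
      (hKU.mono fun t ht => hreg t ht s hs)
  have bound_tendsto : Tendsto (fun s => κ * dist (f (e s)) y) U (𝓝 0) := by
    simpa only [mul_zero] using (tendsto_iff_dist_tendsto_zero.1 hUy).const_mul κ
  have infDist_tendsto : Tendsto (fun s => infDist (e w) (f ⁻¹' {f (e s)})) U (𝓝 0) :=
    squeeze_zero' (.of_forall fun _ => infDist_nonneg) (hKU.mono estimate) bound_tendsto
  have hUfw : Tendsto (fun s => f (e s)) U (𝓝 (f (e w))) :=
    tendsto_of_tendsto_infDist_preimage (hf w hwK) (.of_forall fun s => mem_range_self (e s))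
      infDist_tendsto
  exact ⟨w, hwK, tendsto_nhds_unique hUfw hUy⟩

theorem image_of_closed_convex_is_closed_general {𝕜 X Y : Type*} [RCLike 𝕜]
    [NormedAddCommGroup X] [NormedSpace 𝕜 X] [NormedSpace ℝ X] [IsScalarTower ℝ 𝕜 X]
    [MetricSpace Y] (hrefl : Function.Surjective (NormedSpace.inclusionInDoubleDual 𝕜 X))
    {f : X → Y} {x₀ : X} {r₀ : ℝ} (hr₀ : 0 < r₀) (hcont : ContinuousOn f (closedBall x₀ r₀))
    (hwlsc : ∀ y ∈ closedBall (f x₀) r₀, LowerSemicontinuous fun x : WeakSpace 𝕜 X =>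
      infDist ((toWeakSpace 𝕜 X).symm x) (f ⁻¹' {y}))
    (hmr : MetricallyRegularAt f x₀) :
    ∃ ρ : ℝ, 0 < ρ ∧ ρ < r₀ ∧ ∀ S : Set X, IsClosed S → Convex ℝ S →
      S ⊆ closedBall x₀ ρ → IsClosed (f '' S) := by
  have hfx₀ : ContinuousAt f x₀ := hcont.continuousAt (closedBall_mem_nhds x₀ hr₀)
  obtain ⟨κ, U, hU, hreg⟩ := hmr.exists_nhds_infDist_preimage_le hfx₀
  have hV : U ∩ f ⁻¹' closedBall (f x₀) r₀ ∈ 𝓝 x₀ :=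
    inter_mem hU (hfx₀ (closedBall_mem_nhds _ hr₀))
  obtain ⟨ρ, hρV, hρ, hρr₀⟩ : ∃ ρ : ℝ,
      closedBall x₀ ρ ⊆ U ∩ f ⁻¹' closedBall (f x₀) r₀ ∧ 0 < ρ ∧ ρ < r₀ :=
    ((eventually_closedBall_subset hV).filter_mono nhdsWithin_le_nhds |>.and
      (Ioo_mem_nhdsGT hr₀)).exists
  refine ⟨ρ, hρ, hρr₀, fun S hclosed hconv hS => ?_⟩
  have hcompact : IsCompact (toWeakSpace 𝕜 X '' S) :=
    isCompact_toWeakSpace_image_of_isClosed_of_convex hrefl hclosed hconv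
      (isBounded_closedBall.subset hS)
  have hfS : ∀ s ∈ S, ContinuousAt f s := fun s hs =>
    hcont.continuousAt (closedBall_mem_nhds_of_mem (closedBall_subset_ball hρr₀ (hS hs)))
  have himage := isClosed_image_of_isCompact_of_infDist_preimage_le hcompact
    (e := (toWeakSpace 𝕜 X).symm) (f := f) (κ := κ)
    (forall_mem_image.2 hfS)
    (forall_mem_image.2 fun s hs => hwlsc (f s) (hρV (hS hs)).2)
    (forall_mem_image.2 fun t ht => forall_mem_image.2 fun s hs =>
      hreg t (hρV (hS ht)).1 s (hρV (hS hs)).1)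
  simpa only [image_image, LinearEquiv.symm_apply_apply] using himage

end

/-- Proposition 3.4 of the paper: under metric regularity and weak lower
semicontinuity of the distance functions `x ↦ dist(x, f⁻¹(y))`, images of closed
convex sets close to `x₀` under `f` are closed, provided `X` is reflexive. -/
theorem image_of_closed_convex_is_closed
    {X Y : Type*} [NormedAddCommGroup X] [NormedSpace ℝ X] [CompleteSpace X]
    [NormedAddCommGroup Y] [NormedSpace ℝ Y] [CompleteSpace Y]
    -- (iii) X is reflexive
    (hrefl : Function.Surjective (NormedSpace.inclusionInDoubleDual ℝ X))
    (Ω : Set X) (hΩopen : IsOpen Ω) (hΩne : Ω.Nonempty)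
    (f : X → Y) (x₀ : X) (hx₀ : x₀ ∈ Ω)
    (r₀ : ℝ) (hr₀ : 0 < r₀) (hballΩ : closedBall x₀ r₀ ⊆ Ω)
    -- (i) f is continuous on B(x₀, r₀)
    (hcont : ContinuousOn f (closedBall x₀ r₀))
    -- (ii) for every y ∈ B(f(x₀), r₀), x ↦ dist(x, f⁻¹(y)) is weakly l.s.c.
    (hwlsc : ∀ y ∈ closedBall (f x₀) r₀,
      LowerSemicontinuous (fun x : WeakSpace ℝ X =>
        Metric.infDist (show X from x) {x' : X | f x' = y}))
    -- (iv) f is metrically regular around x₀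
    (hmr : ∃ δ > (0 : ℝ), ∃ κ : ℝ, 0 ≤ κ ∧
      ∀ x ∈ closedBall x₀ δ, ∀ y ∈ closedBall (f x₀) δ,
        Metric.infDist x {x' : X | f x' = y} ≤ κ * ‖y - f x‖) :
    ∃ ρ : ℝ, 0 < ρ ∧ ρ < r₀ ∧ ∀ S : Set X, IsClosed S → Convex ℝ S →
      S ⊆ closedBall x₀ ρ → IsClosed (f '' S) := by
  have hmr' : MetricallyRegularAt f x₀ := by
    simpa only [MetricallyRegularAt, preimage, mem_singleton_iff, dist_eq_norm] using hmr
  exact image_of_closed_convex_is_closed_general hrefl hr₀ hcont hwlsc hmr'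
end

section
/- Let X, Y be real Banach spaces, φ : X → ℝ, g : X → Y, S ⊆ X and C ⊆ Y nonempty closed convex sets, and consider the problem (P): minimize φ(x) over x ∈ S subject to g(x) ∈ C, with feasible region R = S ∩ g⁻¹(C). Let x₀ ∈ R and define F_{x₀} : X → ℝ × Y by F_{x₀}(x) = (φ(x) − φ(x₀), g(x)). If F_{x₀} is open at a linear rate around x₀ and x₀ ∈ int S, then x₀ is not a local solution to (P): for every r > 0 there exists x ∈ S ∩ g⁻¹(C) with ‖x − x₀‖ ≤ r and φ(x) < φ(x₀). -/
open Metric Set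
open scoped NNReal ENNReal

/-!
The points `(-t, g x₀)` tend to `F_{x₀} x₀ = (0, g x₀)` as `t ↓ 0`. Openness of `F_{x₀}` at `x₀`
therefore yields points `x` arbitrarily close to `x₀` with `F_{x₀} x = (-t, g x₀)` for some `t > 0`.
Once such an `x` is close enough to `x₀` to lie in `S`, it is feasible because `g x = g x₀ ∈ C`,
and `φ x = φ x₀ - t < φ x₀`.
-/

open Filter Topology

theorem OpenAtLinearRate.nhds_le_map {X Y : Type*} [PseudoMetricSpace X] [PseudoMetricSpace Y]
    {f : X → Y} {x₀ : X} (hf : OpenAtLinearRate f x₀) : 𝓝 (f x₀) ≤ map f (𝓝 x₀) := by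
  obtain ⟨δ, hδ, ζ, hζ, σ, hσ, hcover⟩ := hf
  intro V hV
  obtain ⟨ε, hε, hεV⟩ := nhds_basis_closedBall.mem_iff.1 (mem_map.1 hV)
  have hr : 0 < min ε δ := lt_min hε hδ
  have hball : closedBall (f x₀) (σ * min ε δ) ∩ closedBall (f x₀) ζ ∈ 𝓝 (f x₀) :=
    inter_mem (closedBall_mem_nhds _ (mul_pos hσ hr)) (closedBall_mem_nhds _ hζ)
  refine mem_of_superset hball ?_
  calc closedBall (f x₀) (σ * min ε δ) ∩ closedBall (f x₀) ζ
      ⊆ f '' closedBall x₀ (min ε δ) :=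
        hcover x₀ (mem_closedBall_self hδ.le) _ ⟨hr.le, min_le_right ε δ⟩
    _ ⊆ V := image_subset_iff.2 ((closedBall_subset_closedBall (min_le_left ε δ)).trans hεV)

section Openness

variable {X Y α : Type*} [TopologicalSpace Y] [TopologicalSpace α] [Preorder α]

theorem frequently_fst_lt_and_snd_eq (a : α) (b : Y) [(𝓝[<] a).NeBot] :
    ∃ᶠ p in 𝓝 (a, b), p.1 < a ∧ p.2 = b := by
  have htendsto : Tendsto (fun t ↦ (t, b)) (𝓝[<] a) (𝓝 (a, b)) :=
    (Continuous.prodMk_left b).continuousAt.mono_left nhdsWithin_le_nhds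
  refine htendsto.frequently (Eventually.frequently ?_)
  filter_upwards [self_mem_nhdsWithin] with t ht using ⟨ht, rfl⟩

theorem frequently_lt_and_eq_of_nhds_le_map [TopologicalSpace X] {φ : X → α} {g : X → Y} {x₀ : X}
    [(𝓝[<] φ x₀).NeBot] (hopen : 𝓝 (φ x₀, g x₀) ≤ map (fun x ↦ (φ x, g x)) (𝓝 x₀)) :
    ∃ᶠ x in 𝓝 x₀, φ x < φ x₀ ∧ g x = g x₀ :=
  frequently_map.1 ((frequently_fst_lt_and_snd_eq (φ x₀) (g x₀)).filter_mono hopen)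

theorem not_local_solution_of_openAtLinearRate_general [PseudoMetricSpace X]
    {φ : X → α} {g : X → Y} {S : Set X} {C : Set Y} {x₀ : X} [(𝓝[<] φ x₀).NeBot]
    (hgC : g x₀ ∈ C) (hopen : 𝓝 (φ x₀, g x₀) ≤ map (fun x ↦ (φ x, g x)) (𝓝 x₀))
    (hS : x₀ ∈ interior S) (r : ℝ) (hr : 0 < r) :
    ∃ x, x ∈ S ∧ g x ∈ C ∧ dist x x₀ ≤ r ∧ φ x < φ x₀ := by
  have hnear : ∀ᶠ x in 𝓝 x₀, x ∈ S ∩ closedBall x₀ r :=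
    inter_mem (mem_interior_iff_mem_nhds.1 hS) (closedBall_mem_nhds x₀ hr)
  obtain ⟨x, ⟨hlt, hgx⟩, hxS, hxr⟩ :=
    ((frequently_lt_and_eq_of_nhds_le_map hopen).and_eventually hnear).exists
  exact ⟨x, hxS, hgx ▸ hgC, hxr, hlt⟩

end Openness

/-- Lemma 4.2 of the paper: if the image-space mapping `F_{x₀}` associated with
problem (P) is open at a linear rate around `x₀ ∈ R` and `x₀ ∈ int S`,
then `x₀` is not a local solution to (P). -/
theorem not_local_solution_of_openAtLinearRate
    {X Y : Type*} [NormedAddCommGroup X] [NormedSpace ℝ X] [CompleteSpace X]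
    [NormedAddCommGroup Y] [NormedSpace ℝ Y] [CompleteSpace Y]
    (φ : X → ℝ) (g : X → Y)
    (S : Set X) (hSne : S.Nonempty) (hScl : IsClosed S) (hSconv : Convex ℝ S)
    (C : Set Y) (hCne : C.Nonempty) (hCcl : IsClosed C) (hCconv : Convex ℝ C)
    (x₀ : X) (hx₀S : x₀ ∈ S) (hx₀C : g x₀ ∈ C)
    (F : X → ℝ × Y) (hF : F = fun x => (φ x - φ x₀, g x))
    (hopen : OpenAtLinearRate F x₀) (hx₀int : x₀ ∈ interior S) :
    ∀ r : ℝ, 0 < r → ∃ x : X, x ∈ S ∧ g x ∈ C ∧ ‖x - x₀‖ ≤ r ∧ φ x < φ x₀ := by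
  subst hF
  simpa only [dist_eq_norm, sub_lt_sub_iff_right] using
    not_local_solution_of_openAtLinearRate_general hx₀C hopen.nhds_le_map hx₀int
end

section
/- Let X be a real Banach space and Y a reflexive real Banach space, φ : X → ℝ, g : X → Y, C ⊆ Y nonempty closed convex, x₀ ∈ g⁻¹(C), c > 0, and define F_{x₀}(x) = (φ(x) − φ(x₀), g(x)) ∈ ℝ × Y. Assume: (i) φ and g are differentiable with Lipschitz continuous derivatives on int B(x₀, r₀) for some r₀ > 0 and DF_{x₀}(x₀) : X → ℝ × Y is surjective; (ii) reg(F_{x₀}, x₀) · lip(DF_{x₀}, int B(x₀, r₀)) / 8 < c. Then there exists ρ ∈ (0, r₀) such that for every S ∈ U_c(X) with x₀ ∈ int S, S ⊆ B(x₀, ρ) and F_{x₀}(S) closed: (t) there exists a global solution x̄ ∈ S ∩ g⁻¹(C) of the problem of minimizing φ over S ∩ g⁻¹(C); (tt) x̄ belongs to the boundary of S (and hence to the boundary of S ∩ g⁻¹(C)); (ttt) there exists y* ∈ Y* with ⟨y*, y − g(x̄)⟩ ≤ 0 for all y ∈ C, such that φ(x̄) + ⟨y*, g(x̄)⟩ =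 min_{x ∈ S} (φ(x) + ⟨y*, g(x)⟩). -/
open Metric Set
open scoped NNReal ENNReal

/-!
The heart of the argument is Polyak's uniform convexity principle. Since `DF` is `L`-Lipschitz,
`F` at the midpoint of `x₁, x₂` misses the midpoint of `F x₁, F x₂` by at most
`(L / 8) ‖x₁ - x₂‖²`. Metric regularity with modulus `κ` corrects this miss, and also any further
displacement of size `σ ‖x₁ - x₂‖²` with `κ (L / 8 + σ) < c`, by moving the midpoint less than
`c ‖x₁ - x₂‖²`, hence without leaving `S`. So `F '' S` contains a ball of radius
`σ ‖x₁ - x₂‖²` around the midpoint of `F x₁, F x₂`.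

This quadratic gain makes minimizing sequences Cauchy, so a minimizer `xbar` exists, and it makes
the closure of `F '' S` convex without lowering the constrained minimum. As `F` is open near `x₀`,
`F xbar` cannot be interior to `F '' S`, so `xbar` is not interior to `S`, while `F x₀` is a
Slater point; separating that closure from the better-than-optimal values yields the multiplier.
-/

open Filter Topology

section Taylor

variable {E G : Type*} [NormedAddCommGroup E] [NormedSpace ℝ E]
  [NormedAddCommGroup G] [NormedSpace ℝ G] {f : E → G} {f' : E → E →L[ℝ] G} {s : Set E}
  {L : ℝ≥0} {x y : E}

theorem norm_image_sub_sub_le_of_lipschitzOnWith_fderiv (hs : Convex ℝ s)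
    (hf : ∀ z ∈ s, HasFDerivWithinAt f (f' z) s z) (hL : LipschitzOnWith L f' s)
    (hx : x ∈ s) (hy : y ∈ s) :
    ‖f y - f x - f' x (y - x)‖ ≤ L / 2 * ‖y - x‖ ^ 2 := by
  set γ : ℝ → E := ⇑(AffineMap.lineMap x y : ℝ →ᵃ[ℝ] E) with hγ
  have hγs : MapsTo γ (Icc 0 1) s := hs.mapsTo_lineMap hx hy
  have hderiv : ∀ t ∈ Icc (0 : ℝ) 1,
      HasDerivWithinAt (fun t ↦ f (γ t) - f x - t • f' x (y - x))
        (f' (γ t) (y - x) - f' x (y - x)) (Icc 0 1) t := fun t ht ↦ by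
    have hfγ : HasDerivWithinAt (f ∘ γ) (f' (γ t) (y - x)) (Icc 0 1) t :=
      (hf _ (hγs ht)).comp_hasDerivWithinAt t AffineMap.hasDerivWithinAt_lineMap hγs
    simpa using (hfγ.sub_const (f x)).fun_sub ((hasDerivWithinAt_id t _).smul_const (f' x (y - x)))
  have hbound : ∀ t ∈ Ico (0 : ℝ) 1,
      ‖f' (γ t) (y - x) - f' x (y - x)‖ ≤ L / 2 * ‖y - x‖ ^ 2 * (2 * t) := fun t ht ↦
    calc ‖f' (γ t) (y - x) - f' x (y - x)‖
        ≤ dist (f' (γ t)) (f' x) * ‖y - x‖ := by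
          rw [dist_eq_norm, ← sub_apply]
          exact ContinuousLinearMap.le_opNorm _ _
      _ ≤ L * dist (γ t) x * ‖y - x‖ := by
          gcongr
          exact hL.dist_le_mul _ (hγs (Ico_subset_Icc_self ht)) _ hx
      _ = L / 2 * ‖y - x‖ ^ 2 * (2 * t) := by
          rw [hγ, dist_lineMap_left, Real.norm_of_nonneg ht.1, dist_comm, dist_eq_norm]
          ring
  have hend := image_norm_le_of_norm_deriv_right_le_deriv_boundary
    (B := fun t ↦ L / 2 * ‖y - x‖ ^ 2 * t ^ 2)
    (fun t ht ↦ (hderiv t ht).continuousWithinAt)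
    (fun t ht ↦ (hderiv t (Ico_subset_Icc_self ht)).mono_of_mem_nhdsWithin
      (Icc_mem_nhdsGE_of_mem ht))
    (by simp [hγ])
    (fun t ↦ by simpa using (hasDerivAt_pow 2 t).const_mul (L / 2 * ‖y - x‖ ^ 2))
    hbound (right_mem_Icc.2 zero_le_one)
  simpa [hγ] using hend

theorem dist_midpoint_image_le_of_lipschitzOnWith_fderiv (hs : Convex ℝ s)
    (hf : ∀ z ∈ s, HasFDerivWithinAt f (f' z) s z) (hL : LipschitzOnWith L f' s)
    (hx : x ∈ s) (hy : y ∈ s) :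
    dist (midpoint ℝ (f x) (f y)) (f (midpoint ℝ x y)) ≤ L / 8 * dist x y ^ 2 := by
  set m := midpoint ℝ x y with hm
  have hms : m ∈ s := hs.midpoint_mem hx hy
  have htaylor (z : E) (hz : z ∈ s) :=
    norm_image_sub_sub_le_of_lipschitzOnWith_fderiv hs hf hL hms hz
  have hxm : ‖x - m‖ = dist x y / 2 := by
    rw [← dist_eq_norm, hm, dist_left_midpoint]; norm_num; ring
  have hym : ‖y - m‖ = dist x y / 2 := by
    rw [← dist_eq_norm, hm, dist_right_midpoint]; norm_num; ring
  have hlinear : f' m (x - m) + f' m (y - m) = 0 := by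
    have : x - m + (y - m) = 0 := by rw [hm, midpoint_eq_smul_add, invOf_eq_inv]; module
    rw [← map_add, this, map_zero]
  -- The first-order terms at the midpoint cancel.
  have hsum : midpoint ℝ (f x) (f y) - f m =
      (2⁻¹ : ℝ) • (f x - f m - f' m (x - m) + (f y - f m - f' m (y - m))) := by
    rw [sub_add_sub_comm, hlinear, midpoint_eq_smul_add, invOf_eq_inv]
    module
  calc dist (midpoint ℝ (f x) (f y)) (f m)
      ≤ 2⁻¹ * (‖f x - f m - f' m (x - m)‖ + ‖f y - f m - f' m (y - m)‖) := by
        rw [dist_eq_norm, hsum, norm_smul, Real.norm_of_nonneg (by norm_num)]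
        gcongr
        exact norm_add_le _ _
    _ ≤ 2⁻¹ * (L / 2 * ‖x - m‖ ^ 2 + L / 2 * ‖y - m‖ ^ 2) := by
        gcongr
        exacts [htaylor x hx, htaylor y hy]
    _ = L / 8 * dist x y ^ 2 := by rw [hxm, hym]; ring

end Taylor

section Convexity

variable {E : Type*} [NormedAddCommGroup E] [NormedSpace ℝ E]

theorem convex_of_isClosed_of_midpoint_mem_s6 {A : Set E} (hA : IsClosed A)
    (hmid : ∀ a ∈ A, ∀ b ∈ A, midpoint ℝ a b ∈ A) : Convex ℝ A := by
  refine convex_iff_segment_subset.2 fun a ha b hb z hz ↦ ?_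
  rw [segment_eq_image_lineMap] at hz
  obtain ⟨t, ht, rfl⟩ := hz
  by_contra hnot
  -- The longest open subinterval around `t` of parameters outside `A` has its midpoint in `A`.
  set T : Set ℝ := AffineMap.lineMap a b ⁻¹' A with hT
  have hTclosed : IsClosed T := hA.preimage AffineMap.lineMap_continuous
  have hleft : sSup (T ∩ Icc 0 t) ∈ T ∩ Icc 0 t :=
    (hTclosed.inter isClosed_Icc).csSup_mem ⟨0, by simpa [hT] using ha, le_rfl, ht.1⟩
      ⟨t, fun _ h ↦ h.2.2⟩
  have hright : sInf (T ∩ Icc t 1) ∈ T ∩ Icc t 1 :=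
    (hTclosed.inter isClosed_Icc).csInf_mem ⟨1, by simpa [hT] using hb, ht.2, le_rfl⟩
      ⟨t, fun _ h ↦ h.2.1⟩
  set p := sSup (T ∩ Icc 0 t)
  set q := sInf (T ∩ Icc t 1)
  have hpt : p < t := hleft.2.2.lt_of_ne fun h ↦ hnot (h ▸ hleft.1)
  have htq : t < q := hright.2.1.lt_of_ne fun h ↦ hnot (h ▸ hright.1)
  have hpq : midpoint ℝ p q ∈ T := by
    rw [hT, mem_preimage, AffineMap.map_midpoint]
    exact hmid _ hleft.1 _ hright.1
  have hmidpoint : midpoint ℝ p q = (p + q) / 2 := by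
    rw [midpoint_eq_smul_add, invOf_eq_inv, smul_eq_mul, inv_mul_eq_div]
  rw [hmidpoint] at hpq
  rcases le_total ((p + q) / 2) t with h | h
  · have : (p + q) / 2 ≤ p :=
      le_csSup ⟨t, fun _ h ↦ h.2.2⟩ ⟨hpq, by linarith [hleft.2.1], h⟩
    linarith
  · have : q ≤ (p + q) / 2 :=
      csInf_le ⟨t, fun _ h ↦ h.2.1⟩ ⟨hpq, h, by linarith [hright.2.2]⟩
    linarith

theorem convex_closure_of_midpoint_mem {A : Set E}
    (hmid : ∀ a ∈ A, ∀ b ∈ A, midpoint ℝ a b ∈ A) : Convex ℝ (closure A) := by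
  refine convex_of_isClosed_of_midpoint_mem_s6 isClosed_closure fun a ha b hb ↦ ?_
  have hcont : Continuous fun p : E × E ↦ midpoint ℝ p.1 p.2 := by
    simp only [midpoint_eq_smul_add]
    fun_prop
  exact map_mem_closure₂ hcont ha hb hmid

theorem UniformlyConvexWith.ball_midpoint_subset_of_dist_lt_diam {c : ℝ} {S : Set E}
    (hS : UniformlyConvexWith c S) {x₁ x₂ : E} (h₁ : x₁ ∈ S) (h₂ : x₂ ∈ S)
    (hpos : 0 < dist x₁ x₂) (hdiam : dist x₁ x₂ < diam S) :
    ball (midpoint ℝ x₁ x₂) (c * dist x₁ x₂ ^ 2) ⊆ S := by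
  obtain ⟨-, -, hconv, hmod⟩ := hS
  intro x hx
  have hlt : dist x (midpoint ℝ x₁ x₂) < setModulus S (dist x₁ x₂) :=
    (mem_ball.1 hx).trans_le (hmod _ hpos hdiam)
  obtain ⟨δ, ⟨-, hδ⟩, hlt⟩ := exists_lt_of_lt_csSup
    (by exact ⟨0, le_rfl, fun a ha b hb _ ↦ by simpa using hconv.midpoint_mem ha hb⟩) hlt
  exact hδ x₁ h₁ x₂ h₂ (dist_eq_norm x₁ x₂).symm (mem_closedBall.2 hlt.le)

theorem UniformlyConvexWith.ball_midpoint_subset_s6 {c : ℝ} {S : Set E}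
    (hS : UniformlyConvexWith c S) (hb : Bornology.IsBounded S) {x₁ x₂ : E} (h₁ : x₁ ∈ S)
    (h₂ : x₂ ∈ S) : ball (midpoint ℝ x₁ x₂) (c * dist x₁ x₂ ^ 2) ⊆ S := by
  intro x hx
  have hne : x₁ ≠ x₂ := by
    rintro rfl
    simp at hx
  -- The modulus is only controlled below the diameter, so `x₁` is moved slightly towards `x₂`.
  set γ : ℝ → E := ⇑(AffineMap.lineMap x₁ x₂ : ℝ →ᵃ[ℝ] E) with hγ
  have hcont : Continuous fun t ↦ c * dist (γ t) x₂ ^ 2 - dist x (midpoint ℝ (γ t) x₂) := by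
    simp only [hγ, midpoint_eq_smul_add, AffineMap.lineMap_apply_module]
    fun_prop
  have hnear : ∀ᶠ t in 𝓝[>] (0 : ℝ),
      0 < c * dist (γ t) x₂ ^ 2 - dist x (midpoint ℝ (γ t) x₂) :=
    (hcont.continuousAt.eventually_const_lt (by simpa [hγ] using hx)).filter_mono
      nhdsWithin_le_nhds
  obtain ⟨t, htx, ht⟩ := (hnear.and (Ioo_mem_nhdsGT (one_pos (α := ℝ)))).exists
  have hdist : dist (γ t) x₂ = (1 - t) * dist x₁ x₂ := by
    rw [hγ, dist_lineMap_right, Real.norm_of_nonneg (by linarith [ht.2])]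
  have hpos := dist_pos.2 hne
  refine hS.ball_midpoint_subset_of_dist_lt_diam
    (hS.2.2.1.mapsTo_lineMap h₁ h₂ (Ioo_subset_Icc_self ht)) h₂ ?_ ?_ (sub_pos.1 htx)
  · rw [hdist]
    exact mul_pos (by linarith [ht.2]) hpos
  · calc dist (γ t) x₂ = (1 - t) * dist x₁ x₂ := hdist
      _ < dist x₁ x₂ := mul_lt_of_lt_one_left hpos (by linarith [ht.1])
      _ ≤ diam S := dist_le_diam_of_mem hb h₁ h₂

end Convexity

section MetricRegularity

variable {X Z : Type*} [NormedAddCommGroup X] [NormedAddCommGroup Z] {F : X → Z} {x₀ : X}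
  {κ : ℝ≥0}

/-- Metric regularity of `F` around `x₀` with modulus `κ`. The fibres are required to be nonempty
because `Metric.infDist` to the empty set is `0`. -/
def IsMetricallyRegularAt (F : X → Z) (x₀ : X) (κ : ℝ≥0) : Prop :=
  ∀ᶠ p : X × Z in 𝓝 (x₀, F x₀),
    (F ⁻¹' {p.2}).Nonempty ∧ infDist p.1 (F ⁻¹' {p.2}) ≤ κ * dist p.2 (F p.1)

theorem IsMetricallyRegularAt.eventually_nhds_le_map (h : IsMetricallyRegularAt F x₀ κ)
    (hF : ContinuousAt F x₀) : ∀ᶠ x in 𝓝 x₀, 𝓝 (F x) ≤ map F (𝓝 x) := by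
  have hgraph : Tendsto (fun x ↦ (x, F x)) (𝓝 x₀) (𝓝 (x₀, F x₀)) := continuousAt_id.prodMk hF
  filter_upwards [hgraph.eventually (eventually_eventually_nhds.2 h)] with x hx
  intro V hV
  obtain ⟨r, hr, hrV⟩ := nhds_basis_ball.mem_iff.1 (mem_map.1 hV)
  have hreg := (Continuous.prodMk_right x).tendsto (F x) |>.eventually hx
  have hclose : ∀ᶠ y in 𝓝 (F x), κ * dist y (F x) < r := by
    have : ContinuousAt (fun y ↦ κ * dist y (F x)) (F x) := by fun_prop
    exact this.eventually_lt_const (by simpa using hr)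
  filter_upwards [hreg, hclose] with y ⟨hne, hle⟩ hlt
  obtain ⟨x', rfl, hx'⟩ := (infDist_lt_iff hne).1 (hle.trans_lt hlt)
  exact hrV (mem_ball'.2 hx')

theorem exists_isMetricallyRegularAt_mul_lt (hF : ∃ κ, IsMetricallyRegularAt F x₀ κ)
    {ℓ : ℝ≥0} {c : ℝ} (h : regBound F x₀ * ℓ < ENNReal.ofReal c) :
    ∃ κ : ℝ≥0, IsMetricallyRegularAt F x₀ κ ∧ κ * ℓ < c := by
  obtain ⟨κ₀, hκ₀⟩ := hF
  have hc : 0 < c := ENNReal.ofReal_pos.1 (h.trans_le' zero_le)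
  rcases eq_or_ne ℓ 0 with rfl | hℓ
  · exact ⟨κ₀, hκ₀, by simpa using hc⟩
  have hlt : regBound F x₀ < ENNReal.ofReal c / ℓ :=
    (ENNReal.lt_div_iff_mul_lt (by simp [hℓ]) (by simp)).2 h
  obtain ⟨_, ⟨κ, ⟨hκ, δ, hδ, hreg⟩, rfl⟩, hκc⟩ := sInf_lt_iff.1 hlt
  lift κ to ℝ≥0 using hκ
  refine ⟨κ, ?_, ?_⟩
  · filter_upwards [hκ₀, prod_mem_nhds (closedBall_mem_nhds x₀ hδ)
      (closedBall_mem_nhds (F x₀) hδ)] with p hp hpδ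
    exact ⟨hp.1, (hreg p.1 hpδ.1 p.2 hpδ.2).trans_eq (by rw [dist_eq_norm])⟩
  · rw [ENNReal.lt_div_iff_mul_lt (by simp [hℓ]) (by simp), ENNReal.ofReal_coe_nnreal,
      ← ENNReal.coe_mul, ← ENNReal.ofReal_coe_nnreal, ENNReal.ofReal_lt_ofReal_iff hc] at hκc
    exact_mod_cast hκc

variable [NormedSpace ℝ X] [NormedSpace ℝ Z]

theorem exists_isMetricallyRegularAt_of_surjective [CompleteSpace X] [CompleteSpace Z]
    {F' : X →L[ℝ] Z} (hF : HasStrictFDerivAt F F' x₀) (hsurj : Function.Surjective F') :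
    ∃ κ, IsMetricallyRegularAt F x₀ κ := by
  have hrange : F'.range = ⊤ := LinearMap.range_eq_top.2 hsurj
  obtain ⟨R, hR⟩ : ∃ R : F'.NonlinearRightInverse, 0 < R.nnnorm :=
    ⟨_, F'.nonlinearRightInverseOfSurjective_nnnorm_pos hrange⟩
  obtain ⟨s, hs, happrox⟩ :=
    hF.approximates_deriv_on_nhds (c := R.nnnorm⁻¹ / 2) (Or.inr (by positivity))
  obtain ⟨η, hη, hηs⟩ := nhds_basis_closedBall.mem_iff.1 hs
  have hrate : (R.nnnorm : ℝ)⁻¹ - (R.nnnorm⁻¹ / 2 : ℝ≥0) = (2 * R.nnnorm : ℝ)⁻¹ := by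
    push_cast
    field_simp
    norm_num
  refine ⟨2 * R.nnnorm, ?_⟩
  have hcont : ContinuousAt
      (fun p : X × Z ↦ 2 * R.nnnorm * dist p.2 (F p.1) + dist p.1 x₀) (x₀, F x₀) := by
    have hFfst : ContinuousAt (fun p : X × Z ↦ F p.1) (x₀, F x₀) :=
      hF.continuousAt.comp (f := Prod.fst) continuousAt_fst
    exact (continuousAt_const.mul (continuousAt_snd.dist hFfst)).add
      (continuousAt_fst.dist continuousAt_const)
  filter_upwards [hcont.eventually_lt_const (u := η) (by simpa using hη)] with ⟨x, y⟩ hxy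
  have hball : closedBall x (2 * R.nnnorm * dist y (F x)) ⊆ s :=
    (closedBall_subset_closedBall' hxy.le).trans hηs
  obtain ⟨x', hx', hFx'⟩ : y ∈ F '' closedBall x (2 * R.nnnorm * dist y (F x)) := by
    refine happrox.surjOn_closedBall_of_nonlinearRightInverse R (by positivity) hball ?_
    rw [hrate, inv_mul_cancel_left₀ (by positivity)]
    exact mem_closedBall.2 le_rfl
  refine ⟨⟨x', hFx'⟩, (infDist_le_dist_of_mem (y := x') hFx').trans ?_⟩
  simpa using mem_closedBall'.1 hx'

end MetricRegularity

theorem lipschitzOnWith_toNNReal_lipOn {α β : Type*} [PseudoMetricSpace α] [PseudoMetricSpace β]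
    {h : α → β} {U : Set α} {K : ℝ≥0} (hK : LipschitzOnWith K h U) :
    LipschitzOnWith (lipOn h U).toNNReal h U := by
  have hclosed : IsClosed {ℓ : ℝ | 0 ≤ ℓ ∧
      ∀ x₁ ∈ U, ∀ x₂ ∈ U, dist (h x₁) (h x₂) ≤ ℓ * dist x₁ x₂} := by
    simp only [Set.ofPred_and, Set.ofPred_forall]
    exact isClosed_Ici.inter <| isClosed_iInter fun a ↦ isClosed_iInter fun _ ↦
      isClosed_iInter fun b ↦ isClosed_iInter fun _ ↦ isClosed_le continuous_const (by fun_prop)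
  have hmem : 0 ≤ lipOn h U ∧ ∀ x₁ ∈ U, ∀ x₂ ∈ U, dist (h x₁) (h x₂) ≤ lipOn h U * dist x₁ x₂ :=
    hclosed.csInf_mem ⟨K, K.2, hK.dist_le_mul⟩ ⟨0, fun _ h ↦ h.1⟩
  refine LipschitzOnWith.of_dist_le_mul ?_
  rw [Real.coe_toNNReal _ hmem.1]
  exact hmem.2

section UniformlyConvexImage

variable {X Z : Type*} [PseudoMetricSpace X] [NormedAddCommGroup Z] [NormedSpace ℝ Z] {F : X → Z}
  {S : Set X} {σ : ℝ}

/-- The image of `S` under `F` is uniformly convex, with the quadratic gain `σ` measured by the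
distance between the points of `S` rather than between their images. -/
def HasUniformlyConvexImage (F : X → Z) (σ : ℝ) (S : Set X) : Prop :=
  ∀ x₁ ∈ S, ∀ x₂ ∈ S,
    closedBall (midpoint ℝ (F x₁) (F x₂)) (σ * dist x₁ x₂ ^ 2) ⊆ F '' S

theorem HasUniformlyConvexImage.convex_closure (h : HasUniformlyConvexImage F σ S) (hσ : 0 ≤ σ) :
    Convex ℝ (closure (F '' S)) := by
  refine convex_closure_of_midpoint_mem ?_
  rintro _ ⟨x₁, h₁, rfl⟩ _ ⟨x₂, h₂, rfl⟩
  exact h x₁ h₁ x₂ h₂ (mem_closedBall_self (by positivity))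

theorem HasUniformlyConvexImage.midpoint_mem_of_mem_closure (h : HasUniformlyConvexImage F σ S)
    (hσ : 0 < σ) {xbar : X} (hxbar : xbar ∈ S) (hF : ContinuousWithinAt F S xbar) {b : Z}
    (hb : b ∈ closure (F '' S)) (hne : b ≠ F xbar) : midpoint ℝ b (F xbar) ∈ F '' S := by
  have hpos : 0 < dist b (F xbar) := dist_pos.2 hne
  obtain ⟨η, hη, hnear⟩ := Metric.continuousWithinAt_iff.1 hF _ (half_pos hpos)
  obtain ⟨_, ⟨x, hx, rfl⟩, hbx⟩ := Metric.mem_closure_iff.1 hb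
    (min (dist b (F xbar) / 2) (σ * η ^ 2)) (by positivity)
  obtain ⟨hbx_half, hbx_gain⟩ := lt_min_iff.1 hbx
  have hfar : η ≤ dist x xbar := by
    by_contra! hlt
    linarith [hnear hx hlt, dist_triangle b (F x) (F xbar)]
  refine h x hx xbar hxbar (mem_closedBall.2 ?_)
  calc dist (midpoint ℝ b (F xbar)) (midpoint ℝ (F x) (F xbar))
      ≤ (dist b (F x) + dist (F xbar) (F xbar)) / ‖(2 : ℝ)‖ := dist_midpoint_midpoint_le' ..
    _ ≤ dist b (F x) := by
      rw [dist_self, add_zero, Real.norm_two]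
      exact half_le_self dist_nonneg
    _ ≤ σ * η ^ 2 := hbx_gain.le
    _ ≤ σ * dist x xbar ^ 2 := by gcongr

end UniformlyConvexImage

section UniformConvexityPrinciple

variable {X Z : Type*} [NormedAddCommGroup X] [NormedSpace ℝ X] [NormedAddCommGroup Z]
  [NormedSpace ℝ Z] {F : X → Z} {x₀ : X} {S : Set X} {σ c : ℝ}

theorem IsMetricallyRegularAt.eventually_closedBall_midpoint_subset {κ ℓ : ℝ≥0}
    (h : IsMetricallyRegularAt F x₀ κ) (hF : ContinuousAt F x₀)
    (hquad : ∀ᶠ p : X × X in 𝓝 (x₀, x₀),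
      dist (midpoint ℝ (F p.1) (F p.2)) (F (midpoint ℝ p.1 p.2)) ≤ ℓ * dist p.1 p.2 ^ 2)
    (hσ : κ * (σ + ℓ) < c) :
    ∀ᶠ p : X × X in 𝓝 (x₀, x₀), p.1 ≠ p.2 →
      closedBall (midpoint ℝ (F p.1) (F p.2)) (σ * dist p.1 p.2 ^ 2) ⊆
        F '' ball (midpoint ℝ p.1 p.2) (c * dist p.1 p.2 ^ 2) := by
  obtain ⟨U, hU, δ, hδ, hreg⟩ : ∃ U ∈ 𝓝 x₀, ∃ δ > 0, ∀ x ∈ U, ∀ y ∈ ball (F x₀) δ,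
      (F ⁻¹' {y}).Nonempty ∧ infDist x (F ⁻¹' {y}) ≤ κ * dist y (F x) := by
    obtain ⟨U, hU, V, hV, hUV⟩ := mem_nhds_prod_iff.1 h
    obtain ⟨δ, hδ, hδV⟩ := nhds_basis_ball.mem_iff.1 hV
    exact ⟨U, hU, δ, hδ, fun x hx y hy ↦ hUV (mk_mem_prod hx (hδV hy))⟩
  have hmidX : ∀ᶠ p : X × X in 𝓝 (x₀, x₀), midpoint ℝ p.1 p.2 ∈ U := by
    have : Tendsto (fun p : X × X ↦ midpoint ℝ p.1 p.2) (𝓝 (x₀, x₀)) (𝓝 x₀) := by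
      simpa using (continuousAt_fst (p := (x₀, x₀))).tendsto.midpoint (R := ℝ) continuousAt_snd
    exact this.eventually hU
  have hmidZ : ∀ᶠ p : X × X in 𝓝 (x₀, x₀),
      σ * dist p.1 p.2 ^ 2 + dist (midpoint ℝ (F p.1) (F p.2)) (F x₀) < δ := by
    have h₁ : Tendsto (fun p : X × X ↦ F p.1) (𝓝 (x₀, x₀)) (𝓝 (F x₀)) :=
      hF.tendsto.comp continuousAt_fst
    have h₂ : Tendsto (fun p : X × X ↦ F p.2) (𝓝 (x₀, x₀)) (𝓝 (F x₀)) :=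
      hF.tendsto.comp continuousAt_snd
    have hd : Tendsto (fun p : X × X ↦ σ * dist p.1 p.2 ^ 2) (𝓝 (x₀, x₀)) (𝓝 0) :=
      Continuous.tendsto' (by fun_prop) _ _ (by simp)
    have := hd.add ((h₁.midpoint (R := ℝ) h₂).dist (tendsto_const_nhds (x := F x₀)))
    exact this.eventually_lt_const (by simpa using hδ)
  filter_upwards [hquad, hmidX, hmidZ] with p hp hpU hpδ hne y hy
  obtain ⟨hfibre, hdist⟩ := hreg _ hpU y (closedBall_subset_ball' hpδ hy)
  have hlt : infDist (midpoint ℝ p.1 p.2) (F ⁻¹' {y}) < c * dist p.1 p.2 ^ 2 :=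
    calc infDist (midpoint ℝ p.1 p.2) (F ⁻¹' {y})
        ≤ κ * dist y (F (midpoint ℝ p.1 p.2)) := hdist
      _ ≤ κ * (σ * dist p.1 p.2 ^ 2 + ℓ * dist p.1 p.2 ^ 2) := by
          gcongr
          exact (dist_triangle _ _ _).trans (add_le_add hy hp)
      _ = κ * (σ + ℓ) * dist p.1 p.2 ^ 2 := by ring
      _ < c * dist p.1 p.2 ^ 2 := by
          have := dist_pos.2 hne
          gcongr
  obtain ⟨x, hxy, hx⟩ := (infDist_lt_iff hfibre).1 hlt
  exact ⟨x, mem_ball'.2 hx, hxy⟩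

theorem UniformlyConvexWith.hasUniformlyConvexImage (hS : UniformlyConvexWith c S)
    (hb : Bornology.IsBounded S)
    (hcover : ∀ x₁ ∈ S, ∀ x₂ ∈ S, x₁ ≠ x₂ →
      closedBall (midpoint ℝ (F x₁) (F x₂)) (σ * dist x₁ x₂ ^ 2) ⊆
        F '' ball (midpoint ℝ x₁ x₂) (c * dist x₁ x₂ ^ 2)) :
    HasUniformlyConvexImage F σ S := by
  intro x₁ h₁ x₂ h₂
  rcases eq_or_ne x₁ x₂ with rfl | hne
  · simpa using mem_image_of_mem F h₁
  · exact (hcover x₁ h₁ x₂ h₂ hne).trans (image_mono (hS.ball_midpoint_subset_s6 hb h₁ h₂))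

theorem hasStrictFDerivAt_fderiv_of_lipschitzOnWith {U : Set X} (hU : U ∈ 𝓝 x₀)
    (hdiff : ∀ x ∈ U, DifferentiableAt ℝ F x) {K : ℝ≥0} (hlip : LipschitzOnWith K (fderiv ℝ F) U) :
    HasStrictFDerivAt F (fderiv ℝ F x₀) x₀ :=
  hasStrictFDerivAt_of_hasFDerivAt_of_continuousAt
    (mem_of_superset hU fun x hx ↦ (hdiff x hx).hasFDerivAt) (hlip.continuousOn.continuousAt hU)

variable [CompleteSpace X] [CompleteSpace Z] {U : Set X} {K : ℝ≥0}

theorem exists_pos_eventually_closedBall_midpoint_subset (hU : U ∈ 𝓝 x₀) (hUconv : Convex ℝ U)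
    (hdiff : ∀ x ∈ U, DifferentiableAt ℝ F x) (hlip : LipschitzOnWith K (fderiv ℝ F) U)
    (hsurj : Function.Surjective (fderiv ℝ F x₀))
    (hreg : regBound F x₀ * ENNReal.ofReal (lipOn (fderiv ℝ F) U) / 8 < ENNReal.ofReal c) :
    ∃ σ > 0, ∀ᶠ p : X × X in 𝓝 (x₀, x₀), p.1 ≠ p.2 →
      closedBall (midpoint ℝ (F p.1) (F p.2)) (σ * dist p.1 p.2 ^ 2) ⊆
        F '' ball (midpoint ℝ p.1 p.2) (c * dist p.1 p.2 ^ 2) := by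
  have hstrict := hasStrictFDerivAt_fderiv_of_lipschitzOnWith hU hdiff hlip
  set L := (lipOn (fderiv ℝ F) U).toNNReal
  obtain ⟨κ, hκ, hκc⟩ : ∃ κ : ℝ≥0, IsMetricallyRegularAt F x₀ κ ∧ κ * (L / 8 : ℝ≥0) < c := by
    refine exists_isMetricallyRegularAt_mul_lt
      (exists_isMetricallyRegularAt_of_surjective hstrict hsurj) ?_
    rwa [ENNReal.coe_div (by norm_num), ← mul_div_assoc]
  obtain ⟨σ, hσc, hσ⟩ : ∃ σ : ℝ, κ * (σ + (L / 8 : ℝ≥0)) < c ∧ 0 < σ := by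
    have hcont : ContinuousAt (fun σ : ℝ ↦ κ * (σ + (L / 8 : ℝ≥0))) 0 := by fun_prop
    exact (((hcont.eventually_lt_const (by simpa using hκc)).filter_mono
      nhdsWithin_le_nhds).and (self_mem_nhdsWithin (s := Ioi 0))).exists
  refine ⟨σ, hσ, hκ.eventually_closedBall_midpoint_subset hstrict.continuousAt ?_ hσc⟩
  filter_upwards [prod_mem_nhds hU hU] with p hp
  exact dist_midpoint_image_le_of_lipschitzOnWith_fderiv hUconv
    (fun x hx ↦ (hdiff x hx).hasFDerivAt.hasFDerivWithinAt)
    (lipschitzOnWith_toNNReal_lipOn hlip) hp.1 hp.2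

theorem exists_pos_eventually_forall_hasUniformlyConvexImage (hU : U ∈ 𝓝 x₀) (hUconv : Convex ℝ U)
    (hdiff : ∀ x ∈ U, DifferentiableAt ℝ F x) (hlip : LipschitzOnWith K (fderiv ℝ F) U)
    (hsurj : Function.Surjective (fderiv ℝ F x₀))
    (hreg : regBound F x₀ * ENNReal.ofReal (lipOn (fderiv ℝ F) U) / 8 < ENNReal.ofReal c) :
    ∃ σ > 0, ∀ᶠ ρ in 𝓝[>] (0 : ℝ), closedBall x₀ ρ ⊆ U ∧
      (∀ x ∈ closedBall x₀ ρ, 𝓝 (F x) ≤ map F (𝓝 x)) ∧ Bornology.IsBounded (F '' closedBall x₀ ρ) ∧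
      ∀ S ⊆ closedBall x₀ ρ, UniformlyConvexWith c S → HasUniformlyConvexImage F σ S := by
  have hstrict := hasStrictFDerivAt_fderiv_of_lipschitzOnWith hU hdiff hlip
  obtain ⟨κ, hκ⟩ := exists_isMetricallyRegularAt_of_surjective hstrict hsurj
  obtain ⟨σ, hσ, hcover⟩ :=
    exists_pos_eventually_closedBall_midpoint_subset hU hUconv hdiff hlip hsurj hreg
  have hlocal : ∀ᶠ x in 𝓝 x₀, x ∈ U ∧ 𝓝 (F x) ≤ map F (𝓝 x) ∧ F x ∈ ball (F x₀) 1 :=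
    (eventually_mem_set.2 hU).and <| (hκ.eventually_nhds_le_map hstrict.continuousAt).and <|
      hstrict.continuousAt.eventually_mem (ball_mem_nhds (F x₀) one_pos)
  rw [nhds_prod_eq] at hcover
  obtain ⟨ρ₀, hρ₀, hall⟩ := nhds_basis_closedBall.prod_self.eventually_iff.1
    (hcover.and (hlocal.prod_inl _))
  refine ⟨σ, hσ, ?_⟩
  filter_upwards [Ioc_mem_nhdsGT hρ₀] with ρ hρ
  have hsub : closedBall x₀ ρ ⊆ closedBall x₀ ρ₀ := closedBall_subset_closedBall hρ.2
  have hball (x : X) (hx : x ∈ closedBall x₀ ρ) := (hall (mk_mem_prod (hsub hx) (hsub hx))).2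
  refine ⟨fun x hx ↦ (hball x hx).1, fun x hx ↦ (hball x hx).2.1,
    (isBounded_ball (x := F x₀) (r := 1)).subset (image_subset_iff.2 fun x hx ↦ (hball x hx).2.2),
    fun S hSρ hS ↦ hS.hasUniformlyConvexImage (isBounded_closedBall.subset hSρ)
      fun x₁ h₁ x₂ h₂ ↦ (hall (mk_mem_prod (hsub (hSρ h₁)) (hsub (hSρ h₂)))).1⟩

end UniformConvexityPrinciple

theorem exists_isMinOn_of_forall_exists_le_sub_sq_dist {X : Type*} [PseudoMetricSpace X]
    [CompleteSpace X] {D : Set X} {J : X → ℝ} {σ : ℝ} (hσ : 0 < σ) (hne : D.Nonempty)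
    (hD : IsClosed D) (hJ : ContinuousOn J D) (hbdd : BddBelow (J '' D))
    (hconv : ∀ x₁ ∈ D, ∀ x₂ ∈ D, ∃ x ∈ D, J x ≤ (J x₁ + J x₂) / 2 - σ * dist x₁ x₂ ^ 2) :
    ∃ x ∈ D, IsMinOn J D x := by
  set m := sInf (J '' D)
  have hm (x : X) (hx : x ∈ D) : m ≤ J x := csInf_le hbdd (mem_image_of_mem J hx)
  obtain ⟨u, -, hu, huD⟩ := exists_seq_tendsto_sInf (hne.image J) hbdd
  choose x hxD hxu using huD
  have hJx : Tendsto (fun n ↦ J (x n)) atTop (𝓝 m) := by simpa only [hxu] using hu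
  have hcauchy : CauchySeq x := by
    refine Metric.cauchySeq_iff.2 fun ε hε ↦ ?_
    obtain ⟨N, hN⟩ := eventually_atTop.1
      (hJx.eventually_lt_const (lt_add_of_pos_right m (by positivity : 0 < σ * ε ^ 2)))
    refine ⟨N, fun i hi j hj ↦ ?_⟩
    obtain ⟨z, hzD, hz⟩ := hconv _ (hxD i) _ (hxD j)
    have hsq : σ * dist (x i) (x j) ^ 2 < σ * ε ^ 2 := by
      linarith [hm z hzD, hN i hi, hN j hj]
    exact lt_of_pow_lt_pow_left₀ 2 hε.le (lt_of_mul_lt_mul_left hsq hσ.le)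
  obtain ⟨xbar, hxbar⟩ := cauchySeq_tendsto_of_complete hcauchy
  have hmem : xbar ∈ D := hD.mem_of_tendsto hxbar (Eventually.of_forall hxD)
  have hval : J xbar = m := tendsto_nhds_unique
    ((hJ xbar hmem).tendsto.comp (tendsto_nhdsWithin_iff.2 ⟨hxbar, Eventually.of_forall hxD⟩)) hJx
  exact ⟨xbar, hmem, fun z hz ↦ hval.trans_le (hm z hz)⟩

section Multiplier

variable {Y : Type*} [NormedAddCommGroup Y] {A : Set (ℝ × Y)} {C : Set Y} {m : ℝ} {p q : ℝ × Y}

theorem lt_fst_of_mem_interior (hp : p ∈ interior A)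
    (hmin : ∀ a ∈ A, a.2 = p.2 → m ≤ a.1) : m < p.1 := by
  have hcont : ContinuousAt (fun t : ℝ ↦ (p.1 - t, p.2)) 0 := by fun_prop
  have hnear : ∀ᶠ t in 𝓝[>] (0 : ℝ), (p.1 - t, p.2) ∈ A :=
    nhdsWithin_le_nhds <| hcont.preimage_mem_nhds <| by
      simpa using mem_interior_iff_mem_nhds.1 hp
  obtain ⟨t, htA, ht⟩ := (hnear.and self_mem_nhdsWithin).exists
  exact (hmin _ htA rfl).trans_lt (sub_lt_self p.1 ht)

variable [NormedSpace ℝ Y]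

theorem exists_separating_of_forall_le_fst (hA : Convex ℝ A) (hC : Convex ℝ C)
    (hp : p ∈ interior A) (hpC : p.2 ∈ C) (hmin : ∀ a ∈ A, a.2 ∈ C → m ≤ a.1) :
    ∃ (α u : ℝ) (l : StrongDual ℝ Y), α < 0 ∧ (∀ a ∈ A, a.1 * α + l a.2 ≤ u) ∧
      ∀ y ∈ C, u ≤ m * α + l y := by
  have hlt (a : ℝ × Y) (ha : a ∈ interior A) (haC : a.2 ∈ C) : m < a.1 :=
    lt_fst_of_mem_interior ha fun b hb hba ↦ hmin b hb (hba ▸ haC)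
  have hdisj : Disjoint (interior A) (Iic m ×ˢ C) :=
    disjoint_left.2 fun a ha haC ↦ (hlt a ha haC.2).not_ge haC.1
  obtain ⟨f, u, hfA, hfC⟩ := geometric_hahn_banach_open hA.interior isOpen_interior
    ((convex_Iic m).prod hC) hdisj
  have hsplit (a : ℝ × Y) :
      f a = a.1 * f (1, 0) + f.comp (ContinuousLinearMap.inr ℝ ℝ Y) a.2 := by
    have : a = a.1 • ((1 : ℝ), (0 : Y)) + (0, a.2) := by ext <;> simp
    conv_lhs => rw [this, map_add, map_smul]
    simp
  have hclosure (a : ℝ × Y) (ha : a ∈ A) : f a ≤ u := by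
    refine closure_minimal (fun b hb ↦ (hfA b hb).le)
      (isClosed_le f.continuous continuous_const) ?_
    rw [hA.closure_interior_eq_closure_of_nonempty_interior ⟨p, hp⟩]
    exact subset_closure ha
  refine ⟨f (1, 0), u, f.comp (ContinuousLinearMap.inr ℝ ℝ Y), ?_,
    fun a ha ↦ hsplit a ▸ hclosure a ha, fun y hy ↦ hsplit (m, y) ▸ hfC (m, y) ⟨self_mem_Iic, hy⟩⟩
  have hslater : f p < f (m, p.2) := (hfA p hp).trans_le (hfC _ ⟨self_mem_Iic, hpC⟩)
  rw [hsplit p, hsplit (m, p.2)] at hslater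
  nlinarith [hlt p hp hpC]

theorem exists_multiplier_of_forall_le_fst (hA : Convex ℝ A) (hC : Convex ℝ C)
    (hp : p ∈ interior A) (hpC : p.2 ∈ C) (hq : q ∈ A) (hqC : q.2 ∈ C)
    (hmin : ∀ a ∈ A, a.2 ∈ C → q.1 ≤ a.1) :
    ∃ ystar : Y →L[ℝ] ℝ, (∀ y ∈ C, ystar (y - q.2) ≤ 0) ∧
      ∀ a ∈ A, q.1 + ystar q.2 ≤ a.1 + ystar a.2 := by
  obtain ⟨α, u, l, hα, hlA, hlC⟩ := exists_separating_of_forall_le_fst hA hC hp hpC hmin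
  refine ⟨α⁻¹ • l, fun y hy ↦ ?_, fun a ha ↦ ?_⟩
  · rw [smul_apply, smul_eq_mul, map_sub]
    exact mul_nonpos_of_nonpos_of_nonneg (inv_nonpos.2 hα.le)
      (by linarith [hlA q hq, hlC y hy])
  · have hle : a.1 * α + l a.2 ≤ q.1 * α + l q.2 := (hlA a ha).trans (hlC _ hqC)
    have hscale (b : ℝ × Y) : b.1 + (α⁻¹ • l) b.2 = α⁻¹ * (b.1 * α + l b.2) := by
      rw [smul_apply, smul_eq_mul]
      field_simp [hα.ne]
    rw [hscale, hscale]
    exact mul_le_mul_of_nonpos_left hle (inv_nonpos.2 hα.le)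

end Multiplier

section ConstrainedMinimization

variable {X Y : Type*} [PseudoMetricSpace X] [NormedAddCommGroup Y] {F : X → ℝ × Y} {S : Set X}
  {C : Set Y} {σ : ℝ} {x₀ xbar : X}

theorem notMem_interior_of_isMinOn (hopen : 𝓝 (F xbar) ≤ map F (𝓝 xbar)) (hxC : (F xbar).2 ∈ C)
    (hmin : IsMinOn (fun x ↦ (F x).1) (S ∩ {x | (F x).2 ∈ C}) xbar) : xbar ∉ interior S := by
  intro hx
  have himage : F xbar ∈ interior (F '' S) := mem_interior_iff_mem_nhds.2 <|
    hopen (image_mem_map (mem_interior_iff_mem_nhds.1 hx))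
  refine (lt_fst_of_mem_interior (m := (F xbar).1) himage ?_).false
  rintro _ ⟨x, hxS, rfl⟩ hsnd
  exact hmin ⟨hxS, by rwa [mem_ofPred_eq, hsnd]⟩

variable [NormedSpace ℝ Y]

theorem HasUniformlyConvexImage.exists_isMinOn [CompleteSpace X]
    (h : HasUniformlyConvexImage F σ S) (hσ : 0 < σ) (hS : IsClosed S) (hF : ContinuousOn F S)
    (hbdd : Bornology.IsBounded (F '' S)) (hC : IsClosed C) (hCconv : Convex ℝ C)
    (hne : (S ∩ {x | (F x).2 ∈ C}).Nonempty) :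
    ∃ x ∈ S ∩ {x | (F x).2 ∈ C}, IsMinOn (fun x ↦ (F x).1) (S ∩ {x | (F x).2 ∈ C}) x := by
  refine exists_isMinOn_of_forall_exists_le_sub_sq_dist hσ hne
    ((continuous_snd.comp_continuousOn hF).preimage_isClosed_of_isClosed hS hC)
    ((continuous_fst.comp_continuousOn hF).mono inter_subset_left) ?_ ?_
  · refine hbdd.image_fst.bddBelow.mono ?_
    rw [image_image]
    exact image_mono inter_subset_left
  · rintro x₁ ⟨h₁, h₁C⟩ x₂ ⟨h₂, h₂C⟩
    have hmem : midpoint ℝ (F x₁) (F x₂) - (σ * dist x₁ x₂ ^ 2, 0) ∈ F '' S := by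
      refine h x₁ h₁ x₂ h₂ ?_
      rw [mem_closedBall, dist_eq_norm, sub_sub_cancel_left, norm_neg, Prod.norm_mk, norm_zero,
        Real.norm_of_nonneg (by positivity), max_eq_left (by positivity)]
    obtain ⟨x, hx, hFx⟩ := hmem
    refine ⟨x, ⟨hx, ?_⟩, ?_⟩
    · have : (F x).2 = midpoint ℝ (F x₁).2 (F x₂).2 := by
        simp [hFx, midpoint_eq_smul_add]
      rw [mem_ofPred_eq, this]
      exact hCconv.midpoint_mem h₁C h₂C
    · refine le_of_eq ?_
      simp only [hFx, midpoint_eq_smul_add, Prod.fst_sub, Prod.smul_fst, Prod.fst_add,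
        smul_eq_mul, invOf_eq_inv]
      ring

theorem HasUniformlyConvexImage.fst_le_of_mem_closure (h : HasUniformlyConvexImage F σ S)
    (hσ : 0 < σ) (hC : Convex ℝ C) (hxS : xbar ∈ S) (hxC : (F xbar).2 ∈ C)
    (hF : ContinuousWithinAt F S xbar)
    (hmin : IsMinOn (fun x ↦ (F x).1) (S ∩ {x | (F x).2 ∈ C}) xbar) {b : ℝ × Y}
    (hb : b ∈ closure (F '' S)) (hbC : b.2 ∈ C) : (F xbar).1 ≤ b.1 := by
  rcases eq_or_ne b (F xbar) with rfl | hne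
  · exact le_rfl
  obtain ⟨x, hx, hFx⟩ := h.midpoint_mem_of_mem_closure hσ hxS hF hb hne
  have hsnd : (F x).2 = midpoint ℝ b.2 (F xbar).2 := by simp [hFx, midpoint_eq_smul_add]
  have hfst : (F x).1 = (b.1 + (F xbar).1) / 2 := by
    simp only [hFx, midpoint_eq_smul_add, Prod.smul_fst, Prod.fst_add, smul_eq_mul, invOf_eq_inv]
    ring
  have hle : (F xbar).1 ≤ (F x).1 :=
    hmin ⟨hx, by rw [mem_ofPred_eq, hsnd]; exact hC.midpoint_mem hbC hxC⟩
  linarith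

theorem HasUniformlyConvexImage.exists_multiplier (h : HasUniformlyConvexImage F σ S) (hσ : 0 < σ)
    (hC : Convex ℝ C) (hx₀ : x₀ ∈ interior S) (hx₀C : (F x₀).2 ∈ C)
    (hopen : 𝓝 (F x₀) ≤ map F (𝓝 x₀)) (hxS : xbar ∈ S) (hxC : (F xbar).2 ∈ C)
    (hF : ContinuousWithinAt F S xbar)
    (hmin : IsMinOn (fun x ↦ (F x).1) (S ∩ {x | (F x).2 ∈ C}) xbar) :
    ∃ ystar : Y →L[ℝ] ℝ, (∀ y ∈ C, ystar (y - (F xbar).2) ≤ 0) ∧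
      ∀ x ∈ S, (F xbar).1 + ystar (F xbar).2 ≤ (F x).1 + ystar (F x).2 := by
  have hslater : F x₀ ∈ interior (closure (F '' S)) := mem_interior_iff_mem_nhds.2 <|
    mem_of_superset (hopen (image_mem_map (mem_interior_iff_mem_nhds.1 hx₀))) subset_closure
  obtain ⟨ystar, hnormal, hlagrangian⟩ := exists_multiplier_of_forall_le_fst
    (h.convex_closure hσ.le) hC hslater hx₀C (subset_closure (mem_image_of_mem F hxS)) hxC
    fun b hb hbC ↦ h.fst_le_of_mem_closure hσ hC hxS hxC hF hmin hb hbC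
  exact ⟨ystar, hnormal, fun x hx ↦ hlagrangian _ (subset_closure (mem_image_of_mem F hx))⟩

end ConstrainedMinimization

theorem lipschitzOnWith_fderiv_prodMk {E G H : Type*} [NormedAddCommGroup E] [NormedSpace ℝ E]
    [NormedAddCommGroup G] [NormedSpace ℝ G] [NormedAddCommGroup H] [NormedSpace ℝ H]
    {f : E → G} {g : E → H} {s : Set E} {K₁ K₂ : ℝ≥0} (hf : ∀ x ∈ s, DifferentiableAt ℝ f x)
    (hg : ∀ x ∈ s, DifferentiableAt ℝ g x) (hf' : LipschitzOnWith K₁ (fderiv ℝ f) s)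
    (hg' : LipschitzOnWith K₂ (fderiv ℝ g) s) :
    LipschitzOnWith (max K₁ K₂) (fderiv ℝ fun x ↦ (f x, g x)) s := by
  have hpair : LipschitzOnWith (max K₁ K₂)
      (ContinuousLinearMap.prodₗᵢ ℝ ∘ fun x ↦ (fderiv ℝ f x, fderiv ℝ g x)) s := by
    simpa using (ContinuousLinearMap.prodₗᵢ ℝ).lipschitz.comp_lipschitzOnWith (hf'.prodMk hg')
  intro x hx y hy
  rw [(hf x hx).fderiv_prodMk (hg x hx), (hf y hy).fderiv_prodMk (hg y hy)]
  exact hpair hx hy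

theorem constrained_optimization_solution_general
    {X Y : Type*} [NormedAddCommGroup X] [NormedSpace ℝ X] [CompleteSpace X]
    [NormedAddCommGroup Y] [NormedSpace ℝ Y] [CompleteSpace Y]
    (φ : X → ℝ) (g : X → Y)
    (C : Set Y) (hCcl : IsClosed C) (hCconv : Convex ℝ C)
    (x₀ : X) (hx₀ : g x₀ ∈ C) (c : ℝ) (r₀ : ℝ) (hr₀ : 0 < r₀)
    (F : X → ℝ × Y) (hF : F = fun x => (φ x - φ x₀, g x))
    (hφdiff : ∀ x ∈ ball x₀ r₀, DifferentiableAt ℝ φ x)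
    (hgdiff : ∀ x ∈ ball x₀ r₀, DifferentiableAt ℝ g x)
    (hφlip : ∃ K : ℝ≥0, LipschitzOnWith K (fderiv ℝ φ) (ball x₀ r₀))
    (hglip : ∃ K : ℝ≥0, LipschitzOnWith K (fderiv ℝ g) (ball x₀ r₀))
    (hsurj : Function.Surjective (fderiv ℝ F x₀))
    (hreg : regBound F x₀ * ENNReal.ofReal (lipOn (fderiv ℝ F) (ball x₀ r₀)) / 8
      < ENNReal.ofReal c) :
    ∃ ρ : ℝ, 0 < ρ ∧ ρ < r₀ ∧ ∀ S : Set X, UniformlyConvexWith c S →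
      x₀ ∈ interior S → S ⊆ closedBall x₀ ρ →
      ∃ xbar ∈ S ∩ g ⁻¹' C,
        (∀ x ∈ S ∩ g ⁻¹' C, φ xbar ≤ φ x) ∧
        xbar ∈ frontier S ∧ xbar ∈ frontier (S ∩ g ⁻¹' C) ∧
        ∃ ystar : Y →L[ℝ] ℝ, (∀ y ∈ C, ystar (y - g xbar) ≤ 0) ∧
          ∀ x ∈ S, φ xbar + ystar (g xbar) ≤ φ x + ystar (g x) := by
  obtain ⟨⟨K₁, hK₁⟩, K₂, hK₂⟩ := And.intro hφlip hglip
  have hφ (x : X) (hx : x ∈ ball x₀ r₀) : DifferentiableAt ℝ (fun x ↦ φ x - φ x₀) x :=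
    (hφdiff x hx).sub_const (φ x₀)
  have hφ' : fderiv ℝ (fun x ↦ φ x - φ x₀) = fderiv ℝ φ := funext fun _ ↦ fderiv_sub_const _
  have hdiff (x : X) (hx : x ∈ ball x₀ r₀) : DifferentiableAt ℝ F x :=
    hF ▸ (hφ x hx).prodMk (hgdiff x hx)
  have hlip : LipschitzOnWith (max K₁ K₂) (fderiv ℝ F) (ball x₀ r₀) :=
    hF ▸ lipschitzOnWith_fderiv_prodMk hφ hgdiff (hφ' ▸ hK₁) hK₂
  obtain ⟨σ, hσ, hsmall⟩ := exists_pos_eventually_forall_hasUniformlyConvexImage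
    (ball_mem_nhds x₀ hr₀) (convex_ball x₀ r₀) hdiff hlip hsurj hreg
  obtain ⟨ρ, ⟨hρU, hopen, hbdd, himage⟩, hρ⟩ := (hsmall.and (Ioo_mem_nhdsGT hr₀)).exists
  subst hF
  refine ⟨ρ, hρ.1, hρ.2, fun S hS hx₀S hSρ ↦ ?_⟩
  have hconv := himage S hSρ hS
  have hcont : ContinuousOn (fun x ↦ (φ x - φ x₀, g x)) S := fun x hx ↦
    (hdiff x (hρU (hSρ hx))).continuousAt.continuousWithinAt
  obtain ⟨xbar, ⟨hxS, hxC⟩, hmin⟩ := hconv.exists_isMinOn hσ hS.2.1 hcont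
    (hbdd.subset (image_mono hSρ)) hCcl hCconv ⟨x₀, interior_subset hx₀S, hx₀⟩
  have hnot := notMem_interior_of_isMinOn (hopen xbar (hSρ hxS)) hxC hmin
  obtain ⟨ystar, hnormal, hlagrangian⟩ := hconv.exists_multiplier hσ hCconv hx₀S hx₀
    (hopen x₀ (mem_closedBall_self hρ.1.le)) hxS hxC (hcont xbar hxS) hmin
  refine ⟨xbar, ⟨hxS, hxC⟩, fun x hx ↦ sub_le_sub_iff_right _ |>.1 (hmin hx),
    ⟨subset_closure hxS, hnot⟩,
    ⟨subset_closure ⟨hxS, hxC⟩, fun h ↦ hnot (interior_mono inter_subset_left h)⟩,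
    ystar, hnormal, fun x hx ↦ ?_⟩
  linarith [hlagrangian x hx]

/-- Theorem 4.3 of the paper: existence of a global solution to the constrained
problem (P) over uniformly convex sets, its location on the boundary, and its
characterization as a minimizer of the Lagrangian. -/
theorem constrained_optimization_solution
    {X Y : Type*} [NormedAddCommGroup X] [NormedSpace ℝ X] [CompleteSpace X]
    [NormedAddCommGroup Y] [NormedSpace ℝ Y] [CompleteSpace Y]
    -- (i) Y is reflexive
    (hrefl : Function.Surjective (NormedSpace.inclusionInDoubleDual ℝ Y))
    (φ : X → ℝ) (g : X → Y)
    (C : Set Y) (hCne : C.Nonempty) (hCcl : IsClosed C) (hCconv : Convex ℝ C)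
    (x₀ : X) (hx₀ : g x₀ ∈ C) (c : ℝ) (hc : 0 < c) (r₀ : ℝ) (hr₀ : 0 < r₀)
    (F : X → ℝ × Y) (hF : F = fun x => (φ x - φ x₀, g x))
    -- (ii) φ, g ∈ C^{1,1}(int B(x₀, r₀)) and DF_{x₀}(x₀) is onto
    (hφdiff : ∀ x ∈ ball x₀ r₀, DifferentiableAt ℝ φ x)
    (hgdiff : ∀ x ∈ ball x₀ r₀, DifferentiableAt ℝ g x)
    (hφlip : ∃ K : ℝ≥0, LipschitzOnWith K (fderiv ℝ φ) (ball x₀ r₀))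
    (hglip : ∃ K : ℝ≥0, LipschitzOnWith K (fderiv ℝ g) (ball x₀ r₀))
    (hsurj : Function.Surjective (fderiv ℝ F x₀))
    -- (iii) reg(F_{x₀}, x₀) · lip(DF_{x₀}, int B(x₀, r₀)) / 8 < c
    (hreg : regBound F x₀ * ENNReal.ofReal (lipOn (fderiv ℝ F) (ball x₀ r₀)) / 8
      < ENNReal.ofReal c) :
    ∃ ρ : ℝ, 0 < ρ ∧ ρ < r₀ ∧ ∀ S : Set X, UniformlyConvexWith c S →
      x₀ ∈ interior S → S ⊆ closedBall x₀ ρ → IsClosed (F '' S) →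
      ∃ xbar ∈ S ∩ g ⁻¹' C,
        -- (t) xbar is a global solution of (P)
        (∀ x ∈ S ∩ g ⁻¹' C, φ xbar ≤ φ x) ∧
        -- (tt) xbar lies on the boundary of S and of the feasible region
        xbar ∈ frontier S ∧ xbar ∈ frontier (S ∩ g ⁻¹' C) ∧
        -- (ttt) Lagrangian characterization with a normal-cone multiplier
        ∃ ystar : Y →L[ℝ] ℝ, (∀ y ∈ C, ystar (y - g xbar) ≤ 0) ∧
          ∀ x ∈ S, φ xbar + ystar (g xbar) ≤ φ x + ystar (g x) := by
  obtain ⟨ρ, hρ, hρr, h⟩ := constrained_optimization_solution_general φ g C hCcl hCconv x₀ hx₀ c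
    r₀ hr₀ F hF hφdiff hgdiff hφlip hglip hsurj hreg
  exact ⟨ρ, hρ, hρr, fun S hS hx₀S hSρ _ ↦ h S hS hx₀S hSρ⟩
end
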